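/- arXiv:1609.00135 — 4 statements merged into one kernel-verified Lean document; each statement's English description precedes it below -/
import Mathlib

section
/- Let x be a solution of the heavy ball equation with vanishing damping and source term g satisfying ∫₀^∞ (1+t)^α ‖g(t)‖ dt < ∞. Then x(t) converges weakly in H as t → +∞ to some point x* ∈ argmin Φ. -/
open MeasureTheory Filter Real Set RealInnerProductSpace

lemma hb_sub_le (f f' k : ℝ → ℝ) (T : ℝ) (hf : ∀ t, T ≤ t → HasDerivAt f (f' t) t)
    (hk : IntegrableOn k (Ici T)) (hle : ∀ t, T ≤ t → f' t ≤ k t) (a b : ℝ) (ha : T ≤ a)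
    (hab : a ≤ b) : f b - f a ≤ ∫ y in a..b, k y := by
  apply intervalIntegral.sub_le_integral_of_hasDeriv_right_of_le (g' := f') hab
  · intro t ht
    exact (hf t (ha.trans ht.1)).continuousAt.continuousWithinAt
  · intro t ht
    exact (hf t (ha.trans ht.1.le)).hasDerivWithinAt
  · exact hk.mono_set (fun t ht => ha.trans ht.1)
  · intro t ht
    exact hle t (ha.trans ht.1.le)

lemma hb_int_le (k : ℝ → ℝ) (T : ℝ) (hk : IntegrableOn k (Ici T)) (b : ℝ) (hb : T ≤ b) :
    |∫ y in T..b, k y| ≤ ∫ y in Ici T, |k y| := by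
  rw [intervalIntegral.integral_of_le hb]
  refine (abs_integral_le_integral_abs).trans ?_
  apply setIntegral_mono_set hk.abs
  · exact Eventually.of_forall fun t => abs_nonneg _
  · exact (show Ioc T b ⊆ Ici T from fun t ht => ht.1.le).eventuallyLE

lemma hb_conv (f f' k : ℝ → ℝ) (T m : ℝ) (hf : ∀ t, T ≤ t → HasDerivAt f (f' t) t)
    (hk : IntegrableOn k (Ici T)) (hle : ∀ t, T ≤ t → f' t ≤ k t)
    (hm : ∀ t, T ≤ t → m ≤ f t) : ∃ L, Tendsto f atTop (nhds L) := by
  have hlim := intervalIntegral_tendsto_integral_Ioi (f := k) T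
    (hk.mono_set Ioi_subset_Ici_self) (tendsto_id (α := ℝ) (x := atTop))
  let φ : ℝ → ℝ := fun t => f (max T t) - ∫ y in T..(max T t), k y
  have hii : ∀ a b, T ≤ a → T ≤ b → IntervalIntegrable k volume a b := by
    intro a b ha hb
    apply IntegrableOn.intervalIntegrable
    apply hk.mono_set
    intro t ht
    exact (le_min ha hb).trans ht.1
  have hanti : Antitone φ := by
    intro a b hab
    have h1 := hb_sub_le f f' k T hf hk hle (max T a) (max T b) (le_max_left _ _)
      (max_le_max le_rfl hab)
    have h2 := intervalIntegral.integral_add_adjacent_intervals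
      (hii T (max T a) le_rfl (le_max_left _ _))
      (hii (max T a) (max T b) (le_max_left _ _) (le_max_left _ _))
    simp only [φ]
    linarith
  have hbdd : BddBelow (range φ) := by
    refine ⟨m - ∫ y in Ici T, |k y|, ?_⟩
    rintro _ ⟨t, rfl⟩
    have h1 := hm (max T t) (le_max_left _ _)
    have h2 := abs_le.1 (hb_int_le k T hk (max T t) (le_max_left _ _))
    simp only [φ]
    linarith [h2.2]
  have h := (tendsto_atTop_ciInf hanti hbdd).add hlim
  refine ⟨_, h.congr' ?_⟩
  filter_upwards [eventually_ge_atTop T] with t ht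
  simp [φ, max_eq_right ht]

lemma hb_core_pt (c l l' a b e n p w P' G' : ℝ) (hc : 0 < c) (hl : 1 ≤ l) (hl'0 : 0 ≤ l')
    (hl' : l' ≤ c / 24) (ha : 0 ≤ a) (hb : 0 ≤ b) (he : 0 ≤ e) (hn : 0 ≤ n) (hp : |p| ≤ a * b)
    (hw : l * w = l' ^ 2)
    (hP : P' ≤ 2 * l * l' * (a ^ 2 / 2 + e) - c * l * a ^ 2 + l ^ 2 * n * a)
    (hG : G' ≤ l' * p + l * a ^ 2 - l * e + l * n * b) :
    l' * p ≤ l * a ^ 2 + w * b ^ 2 ∧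
    0 ≤ w ∧
    (l * a) ^ 2 ≤ 3 * (l ^ 2 * (a ^ 2 / 2 + e) + c / 3 * (l * p + c / 2 * b ^ 2)) ∧
    c ^ 2 / 9 * b ^ 2 ≤ (l ^ 2 * (a ^ 2 / 2 + e) + c / 3 * (l * p + c / 2 * b ^ 2)) ∧
    P' + c / 3 * G' ≤ - (c / 4) * (l * (3 / 2 * a ^ 2 + e)) + (1 / c * w + 3 * (l * n)) *
      (1 + (l ^ 2 * (a ^ 2 / 2 + e) + c / 3 * (l * p + c / 2 * b ^ 2))) := by
  have hl0 : 0 < l := by linarith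
  have hp1 := abs_le.1 hp
  have hw0 : 0 ≤ w := by
    have : 0 ≤ l * w := by rw [hw]; positivity
    exact nonneg_of_mul_nonneg_right this hl0
  have hab : 0 ≤ a * b := by positivity
  have h1 : l' * p ≤ l' * (a * b) := mul_le_mul_of_nonneg_left hp1.2 hl'0
  have hamgm : ∀ r : ℝ, 0 < r → 2 * r * (l' * (a * b)) ≤ r ^ 2 * (l * a ^ 2) + w * b ^ 2 := by
    intro r hr
    have : 0 ≤ l * (r ^ 2 * (l * a ^ 2) + w * b ^ 2 - 2 * r * (l' * (a * b))) := by
      have e1 : l * (r ^ 2 * (l * a ^ 2) + w * b ^ 2 - 2 * r * (l' * (a * b)))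
        = (r * l * a - l' * b) ^ 2 + (l * w - l' ^ 2) * b ^ 2 := by ring
      rw [e1, hw]; nlinarith [sq_nonneg (r * l * a - l' * b)]
    have := nonneg_of_mul_nonneg_right this hl0
    linarith
  have hlp : -(l * a * b) ≤ l * p := by nlinarith [hp1.1]
  have hle : 0 ≤ l ^ 2 * e := by positivity
  have hcl : -(c / 3 * (l * a * b)) ≤ c / 3 * (l * p) := by
    have := mul_le_mul_of_nonneg_left hlp (by positivity : 0 ≤ c / 3)
    linarith
  have hs : (l * a) ^ 2 ≤ 3 * (l ^ 2 * (a ^ 2 / 2 + e) + c / 3 * (l * p + c / 2 * b ^ 2)) := by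
    nlinarith [sq_nonneg (c * b - l * a)]
  have hbb : c ^ 2 / 9 * b ^ 2 ≤
      (l ^ 2 * (a ^ 2 / 2 + e) + c / 3 * (l * p + c / 2 * b ^ 2)) := by
    nlinarith [sq_nonneg (c * b / 3 - l * a)]
  refine ⟨?_, hw0, hs, hbb, ?_⟩
  · have := hamgm 1 one_pos
    have h0 : 0 ≤ l' * (a * b) := by positivity
    linarith
  set F := l ^ 2 * (a ^ 2 / 2 + e) + c / 3 * (l * p + c / 2 * b ^ 2) with hF
  have hln : 0 ≤ l * n := by positivity
  have t1 : 2 * l * l' * (a ^ 2 / 2 + e) ≤ c / 12 * (l * (a ^ 2 / 2 + e)) := by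
    have := mul_le_mul_of_nonneg_right hl' (by positivity : 0 ≤ 2 * (l * (a ^ 2 / 2 + e)))
    linarith
  have t2 : c / 3 * (l' * p) ≤ c / 4 * (l * a ^ 2) + c / 9 * (w * b ^ 2) := by
    have := mul_le_mul_of_nonneg_left (hamgm (3 / 2) (by norm_num)) (by positivity : 0 ≤ c / 9)
    have h3 := mul_le_mul_of_nonneg_left h1 (by positivity : 0 ≤ c / 3)
    linarith
  have t3 : c / 9 * (w * b ^ 2) ≤ 1 / c * w * (1 + F) := by
    have e2 : c / 9 * (w * b ^ 2) = 1 / c * w * (c ^ 2 / 9 * b ^ 2) := by field_simp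
    rw [e2]
    apply mul_le_mul_of_nonneg_left _ (by positivity)
    linarith
  have t4 : l * n * (l * a + c / 3 * b) ≤ l * n * (3 * (1 + F)) := by
    apply mul_le_mul_of_nonneg_left _ hln
    nlinarith [sq_nonneg (l * a - 1), sq_nonneg (c / 3 * b - 1)]
  have t5 := mul_le_mul_of_nonneg_left hG (by positivity : 0 ≤ c / 3)
  clear_value F
  linarith

lemma hb_core (c T : ℝ) (l l' a b e n p w P' G' : ℝ → ℝ) (hc : 0 < c) (hT : 1 ≤ T)
    (hl : ∀ t, T ≤ t → 1 ≤ l t) (hl2 : ∀ t, T ≤ t → l t ≤ 2 * t)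
    (hl'0 : ∀ t, T ≤ t → 0 ≤ l' t) (hl' : ∀ t, T ≤ t → l' t ≤ c / 24)
    (ha : ∀ t, T ≤ t → 0 ≤ a t) (hb : ∀ t, T ≤ t → 0 ≤ b t) (he : ∀ t, T ≤ t → 0 ≤ e t)
    (hn : ∀ t, T ≤ t → 0 ≤ n t)
    (hp : ∀ t, T ≤ t → |p t| ≤ a t * b t) (hw : ∀ t, T ≤ t → l t * w t = l' t ^ 2)
    (hPd : ∀ t, T ≤ t → HasDerivAt (fun t => l t ^ 2 * (a t ^ 2 / 2 + e t)) (P' t) t)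
    (hGd : ∀ t, T ≤ t → HasDerivAt (fun t => l t * p t + c / 2 * b t ^ 2) (G' t) t)
    (hP : ∀ t, T ≤ t → P' t ≤ 2 * l t * l' t * (a t ^ 2 / 2 + e t) - c * l t * a t ^ 2
      + l t ^ 2 * n t * a t)
    (hG : ∀ t, T ≤ t → G' t ≤ l' t * p t + l t * a t ^ 2 - l t * e t + l t * n t * b t)
    (hca : ContinuousOn a (Ici T)) (hce : ContinuousOn e (Ici T)) (hcl : ContinuousOn l (Ici T))
    (hiw : IntegrableOn w (Ici T)) (hin : IntegrableOn (fun t => l t * n t) (Ici T)) :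
    Tendsto e atTop (nhds 0) ∧ ∃ L, Tendsto (fun t => b t ^ 2) atTop (nhds L) := by
  have pt := fun t ht => hb_core_pt c (l t) (l' t) (a t) (b t) (e t) (n t) (p t) (w t) (P' t)
    (G' t) hc (hl t ht) (hl'0 t ht) (hl' t ht) (ha t ht) (hb t ht) (he t ht) (hn t ht) (hp t ht)
    (hw t ht) (hP t ht) (hG t ht)
  set P : ℝ → ℝ := fun t => l t ^ 2 * (a t ^ 2 / 2 + e t) with hPdef
  set G : ℝ → ℝ := fun t => l t * p t + c / 2 * b t ^ 2 with hGdef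
  set F : ℝ → ℝ := fun t => P t + c / 3 * G t with hFdef
  set D : ℝ → ℝ := fun t => l t * (3 / 2 * a t ^ 2 + e t) with hDdef
  set k : ℝ → ℝ := fun t => 1 / c * w t + 3 * (l t * n t) with hkdef
  have hik : IntegrableOn k (Ici T) := (hiw.const_mul _).add (hin.const_mul _)
  have hFd : ∀ t, T ≤ t → HasDerivAt F (P' t + c / 3 * G' t) t := fun t ht =>
    (hPd t ht).add ((hGd t ht).const_mul _)
  have hbF : ∀ t, T ≤ t → c ^ 2 / 9 * b t ^ 2 ≤ F t := fun t ht => (pt t ht).2.2.2.1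
  have hsF : ∀ t, T ≤ t → (l t * a t) ^ 2 ≤ 3 * F t := fun t ht => (pt t ht).2.2.1
  have hF' : ∀ t, T ≤ t → P' t + c / 3 * G' t ≤ -(c / 4) * D t + k t * (1 + F t) :=
    fun t ht => (pt t ht).2.2.2.2
  have hF0 : ∀ t, T ≤ t → 0 ≤ F t := fun t ht => le_trans (by positivity) (hbF t ht)
  have hD0 : ∀ t, T ≤ t → 0 ≤ D t := fun t ht => by
    have := hl t ht
    have := he t ht
    simp only [hDdef]; positivity
  have hk0 : ∀ t, T ≤ t → 0 ≤ k t := fun t ht => by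
    have h1 := (pt t ht).2.1
    have := hl t ht
    have := hn t ht
    simp only [hkdef]; positivity
  obtain ⟨M, hM⟩ : ∃ M, ∀ t, T ≤ t → F t ≤ M := by
    refine ⟨exp (log (1 + F T) + ∫ y in Ici T, |k y|), fun t ht => ?_⟩
    have h1 := hb_sub_le (fun t => log (1 + F t)) (fun t => (P' t + c / 3 * G' t) / (1 + F t)) k T
      (fun t ht => ((hFd t ht).const_add 1).log (by linarith [hF0 t ht])) hik
      (fun t ht => by
        rw [div_le_iff₀ (by linarith [hF0 t ht])]
        nlinarith [hF' t ht, hD0 t ht]) T t le_rfl ht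
    have h2 := abs_le.1 (hb_int_le k T hik t ht)
    have h3 : log (1 + F t) ≤ log (1 + F T) + ∫ y in Ici T, |k y| := by
      linarith [h2.2]
    rw [log_le_iff_le_exp (by linarith [hF0 t ht])] at h3
    linarith
  have hM0 : 0 ≤ M := (hF0 T le_rfl).trans (hM T le_rfl)
  have hDc : ContinuousOn D (Ici T) := by
    apply hcl.mul
    exact (continuousOn_const.mul (hca.pow 2)).add hce
  have hDI : IntegrableOn D (Ici T) := by
    rw [integrableOn_Ici_iff_integrableOn_Ioi]
    have hloc : ∀ i : ℝ, IntegrableOn D (Icc T i) := fun i =>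
      (hDc.mono Icc_subset_Ici_self).integrableOn_Icc
    refine integrableOn_Ioi_of_intervalIntegral_norm_bounded (l := atTop) (b := id)
      (4 / c * (F T + ∫ y in Ici T, |k y * (1 + M)|)) T
      (fun i => (hloc i).mono_set Ioc_subset_Icc_self) tendsto_id ?_
    filter_upwards [eventually_ge_atTop T] with t ht
    have hikM : IntegrableOn (fun y => k y * (1 + M)) (Ici T) := hik.mul_const _
    have h1 := intervalIntegral.sub_le_integral_of_hasDeriv_right_of_le (g := F)
      (g' := fun t => P' t + c / 3 * G' t) (φ := fun t => k t * (1 + M) - c / 4 * D t) ht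
      (fun s hs => (hFd s hs.1).continuousAt.continuousWithinAt)
      (fun s hs => (hFd s hs.1.le).hasDerivWithinAt)
      ((hikM.mono_set Icc_subset_Ici_self).sub ((hloc t).const_mul _))
      (fun s hs => by
        have := hF' s hs.1.le
        have h2 := mul_le_mul_of_nonneg_left (hM s hs.1.le) (hk0 s hs.1.le)
        linarith)
    rw [intervalIntegral.integral_sub, intervalIntegral.integral_const_mul] at h1
    · have h2 := abs_le.1 (hb_int_le _ T hikM t ht)
      have h3 : ∫ s in T..(id t), ‖D s‖ = ∫ s in T..t, D s := by
        apply intervalIntegral.integral_congr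
        intro s hs
        rw [id, uIcc_of_le ht] at hs
        exact abs_of_nonneg (hD0 s hs.1)
      rw [h3]
      have h4 : c / 4 * ∫ s in T..t, D s ≤ F T + ∫ y in Ici T, |k y * (1 + M)| := by
        linarith [h2.2, hF0 t ht]
      calc ∫ s in T..t, D s = 4 / c * (c / 4 * ∫ s in T..t, D s) := by field_simp
        _ ≤ _ := mul_le_mul_of_nonneg_left h4 (by positivity)
    · exact (hikM.mono_set (by rw [uIcc_of_le ht]; exact Icc_subset_Ici_self)).intervalIntegrable
    · exact (((hloc t).mono_set (by rw [uIcc_of_le ht])).intervalIntegrable).const_mul _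
  have hsS : ∀ t, T ≤ t → l t * a t ≤ 1 + 3 * M := fun t ht => by
    nlinarith [hsF t ht, hM t ht, sq_nonneg (l t * a t - 1)]
  obtain ⟨B, hB0, hB⟩ : ∃ B, 0 ≤ B ∧ ∀ t, T ≤ t → b t ≤ B := by
    refine ⟨1 + 9 / c ^ 2 * M, by positivity, fun t ht => ?_⟩
    have h1 : b t ^ 2 ≤ 9 / c ^ 2 * M := by
      have := (hbF t ht).trans (hM t ht)
      calc b t ^ 2 = 9 / c ^ 2 * (c ^ 2 / 9 * b t ^ 2) := by field_simp
        _ ≤ _ := mul_le_mul_of_nonneg_left this (by positivity)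
    nlinarith [sq_nonneg (b t - 1)]
  have hP0 : ∀ t, T ≤ t → 0 ≤ P t := fun t ht => by
    have := he t ht
    simp only [hPdef]; positivity
  obtain ⟨L, hL⟩ : ∃ L, Tendsto P atTop (nhds L) := by
    refine hb_conv P P' (fun t => c * D t + (1 + 3 * M) * (l t * n t)) T 0 hPd
      ((hDI.const_mul _).add (hin.const_mul _)) (fun t ht => ?_) hP0
    have h1 := hP t ht
    have hl1 := hl t ht
    have he1 := he t ht
    have h2 : 2 * l t * l' t * (a t ^ 2 / 2 + e t) ≤ c * D t := by
      have : l' t * (2 * l t * (a t ^ 2 / 2 + e t)) ≤ c / 24 * (2 * l t * (a t ^ 2 / 2 + e t)) :=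
        mul_le_mul_of_nonneg_right (hl' t ht) (by positivity)
      have h5 : 0 ≤ c * (l t * a t ^ 2) := by positivity
      have h6 : 0 ≤ c * (l t * e t) := by positivity
      simp only [hDdef]
      nlinarith
    have h3 : 0 ≤ c * l t * a t ^ 2 := by positivity
    have h4 : l t ^ 2 * n t * a t ≤ (1 + 3 * M) * (l t * n t) := by
      have := hn t ht
      have := mul_le_mul_of_nonneg_right (hsS t ht) (by positivity : 0 ≤ l t * n t)
      linarith
    linarith
  have hL0 : L = 0 := by
    by_contra hne
    have hLpos : 0 < L := lt_of_le_of_ne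
      (ge_of_tendsto hL ((eventually_ge_atTop T).mono hP0)) (Ne.symm hne)
    obtain ⟨S, hS⟩ := eventually_atTop.1 (hL.eventually (lt_mem_nhds (half_lt_self hLpos)))
    apply not_integrableOn_Ioi_inv (a := max S T)
    have hDI2 : IntegrableOn (fun t => 4 / L * D t) (Ioi (max S T)) :=
      (hDI.mono_set (fun t ht => (le_max_right S T).trans (le_of_lt ht))).const_mul _
    refine Integrable.mono' hDI2 (by fun_prop) ?_
    filter_upwards [ae_restrict_mem measurableSet_Ioi] with t ht
    have htS : S ≤ t := (le_max_left S T).trans (le_of_lt ht)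
    have htT : T ≤ t := (le_max_right S T).trans (le_of_lt ht)
    have ht0 : 0 < t := by linarith
    rw [norm_of_nonneg (by positivity)]
    have h1 := hS t htS
    have hl1 := hl t htT
    have h2 : P t ≤ l t * D t := by
      have : 0 ≤ l t ^ 2 * a t ^ 2 := by positivity
      simp only [hPdef, hDdef]; nlinarith
    have h3 : l t * D t ≤ 2 * t * D t := mul_le_mul_of_nonneg_right (hl2 t htT) (hD0 t htT)
    rw [inv_le_iff_one_le_mul₀ ht0]
    have h4 : L ≤ 4 * (t * D t) := by linarith
    calc (1 : ℝ) = L / L := by field_simp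
      _ ≤ 4 * (t * D t) / L := by gcongr
      _ = _ := by ring
  subst hL0
  have hlsq : ∀ t, T ≤ t → 1 ≤ l t ^ 2 := fun t ht => one_le_pow₀ (hl t ht)
  constructor
  · refine tendsto_of_tendsto_of_tendsto_of_le_of_le' tendsto_const_nhds hL
      ((eventually_ge_atTop T).mono he) ?_
    filter_upwards [eventually_ge_atTop T] with t ht
    have := hlsq t ht
    have := he t ht
    simp only [hPdef]
    nlinarith [sq_nonneg (a t), mul_nonneg (sq_nonneg (l t)) (sq_nonneg (a t))]
  have hlp : Tendsto (fun t => l t * p t) atTop (nhds 0) := by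
    have hsq : Tendsto (fun t => B * sqrt (2 * P t)) atTop (nhds 0) := by
      have := ((continuous_sqrt.tendsto _).comp (hL.const_mul 2)).const_mul B
      simpa using this
    refine squeeze_zero_norm' ?_ hsq
    filter_upwards [eventually_ge_atTop T] with t ht
    have hl1 := hl t ht
    have hl0 : 0 ≤ l t := by linarith
    have h1 : l t * a t ≤ sqrt (2 * P t) := by
      apply le_sqrt_of_sq_le
      have := mul_nonneg (sq_nonneg (l t)) (he t ht)
      simp only [hPdef]; nlinarith
    rw [norm_eq_abs, abs_mul, abs_of_nonneg hl0]
    calc l t * |p t| ≤ l t * (a t * b t) := mul_le_mul_of_nonneg_left (hp t ht) hl0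
      _ = b t * (l t * a t) := by ring
      _ ≤ B * sqrt (2 * P t) := mul_le_mul (hB t ht) h1 (mul_nonneg hl0 (ha t ht)) hB0
  obtain ⟨K, hK⟩ : ∃ K, Tendsto G atTop (nhds K) := by
    have hint : IntegrableOn (fun t => 2 * D t + B ^ 2 * w t + B * (l t * n t)) (Ici T) :=
      Integrable.add (Integrable.add (hDI.const_mul 2) (hiw.const_mul (B ^ 2))) (hin.const_mul B)
    refine hb_conv G G' (fun t => 2 * D t + B ^ 2 * w t + B * (l t * n t)) T (-((1 + 3 * M) * B))
      hGd hint (fun t ht => ?_)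
      (fun t ht => ?_)
    · have h1 := hG t ht
      have h2 := (pt t ht).1
      have hl1 := hl t ht
      have he1 := he t ht
      have hn1 := hn t ht
      have h3 : w t * b t ^ 2 ≤ B ^ 2 * w t := by
        rw [mul_comm]
        apply mul_le_mul_of_nonneg_right _ (pt t ht).2.1
        exact pow_le_pow_left₀ (hb t ht) (hB t ht) 2
      have h4 : l t * n t * b t ≤ B * (l t * n t) := by
        rw [mul_comm]
        exact mul_le_mul_of_nonneg_right (hB t ht) (by positivity)
      have h5 : 0 ≤ l t * a t ^ 2 := by positivity
      have h6 : 0 ≤ l t * e t := by positivity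
      simp only [hDdef]
      nlinarith
    · have hl0 : 0 ≤ l t := by linarith [hl t ht]
      have h1 : l t * |p t| ≤ (1 + 3 * M) * B :=
        calc l t * |p t| ≤ l t * (a t * b t) := mul_le_mul_of_nonneg_left (hp t ht) hl0
          _ = (l t * a t) * b t := by ring
          _ ≤ _ := mul_le_mul (hsS t ht) (hB t ht) (hb t ht) (by positivity)
      have h2 := mul_le_mul_of_nonneg_left (neg_abs_le (p t)) hl0
      have h3 : 0 ≤ c / 2 * b t ^ 2 := by positivity
      simp only [hGdef]
      linarith
  refine ⟨2 / c * (K - 0), ((hK.sub hlp).const_mul (2 / c)).congr fun t => ?_⟩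
  simp only [hGdef]
  field_simp
  ring

lemma hb_grad {H : Type*} [NormedAddCommGroup H] [InnerProductSpace ℝ H] [CompleteSpace H]
    (Φ : H → ℝ) (Φ' : H → H) (hΦconv : ConvexOn ℝ Set.univ Φ)
    (hΦdiff : ∀ u : H, HasGradientAt Φ (Φ' u) u) (u y : H) :
    Φ u + ⟪Φ' u, y - u⟫ ≤ Φ y := by
  have hconv : ConvexOn ℝ Set.univ (fun s : ℝ => Φ (AffineMap.lineMap u y s)) := by
    exact hΦconv.comp_affineMap (AffineMap.lineMap u y : ℝ →ᵃ[ℝ] H)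
  have hd : HasDerivAt (fun s : ℝ => Φ (AffineMap.lineMap u y s)) ⟪Φ' u, y - u⟫ 0 := by
    have h1 : HasDerivAt (fun s : ℝ => (AffineMap.lineMap u y s : H)) (y - u) 0 :=
      AffineMap.hasDerivAt_lineMap
    have h2 : HasFDerivAt Φ (InnerProductSpace.toDual ℝ H (Φ' u))
        (AffineMap.lineMap u y (0 : ℝ)) := by
      rw [AffineMap.lineMap_apply_zero]
      exact (hΦdiff u).hasFDerivAt
    simpa [Function.comp_def] using h2.comp_hasDerivAt (0 : ℝ) h1
  have h := hconv.le_slope_of_hasDerivAt (mem_univ 0) (mem_univ 1) one_pos hd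
  simp [slope_def_field] at h
  linarith

lemma hb_ultra {H : Type*} [NormedAddCommGroup H] [InnerProductSpace ℝ H] [CompleteSpace H]
    (x : ℝ → H) (U : Ultrafilter ℝ) (C : ℝ) (hC : ∀ᶠ t in (U : Filter ℝ), ‖x t‖ ≤ C) :
    ∃ p : H, ∀ y : H, Tendsto (fun t => ⟪x t, y⟫) (U : Filter ℝ) (nhds ⟪p, y⟫) := by
  have h : ∀ y : H, ∃ r ∈ Icc (-(C * ‖y‖)) (C * ‖y‖),
      Tendsto (fun t => ⟪x t, y⟫) (U : Filter ℝ) (nhds r) := by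
    intro y
    have := (isCompact_Icc (a := -(C * ‖y‖)) (b := C * ‖y‖)).ultrafilter_le_nhds
      (U.map fun t => ⟪x t, y⟫) (by
        rw [le_principal_iff]
        change ∀ᶠ t in (U : Filter ℝ), ⟪x t, y⟫ ∈ Icc (-(C * ‖y‖)) (C * ‖y‖)
        filter_upwards [hC] with t ht
        rw [mem_Icc, ← abs_le]
        exact (abs_real_inner_le_norm _ _).trans (by gcongr))
    exact this
  choose ℓ hℓ1 hℓ2 using h
  let f : H →ₗ[ℝ] ℝ :=
    { toFun := ℓ
      map_add' := fun y z => by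
        refine tendsto_nhds_unique (hℓ2 (y + z)) ?_
        simpa only [inner_add_right] using (hℓ2 y).add (hℓ2 z)
      map_smul' := fun r y => by
        refine tendsto_nhds_unique (hℓ2 (r • y)) ?_
        simpa only [inner_smul_right, RingHom.id_apply, smul_eq_mul] using (hℓ2 y).const_mul r }
  let F : H →L[ℝ] ℝ := f.mkContinuous C (fun y => by
    rw [norm_eq_abs, abs_le]; exact hℓ1 y)
  refine ⟨(InnerProductSpace.toDual ℝ H).symm F, fun y => ?_⟩
  rw [InnerProductSpace.toDual_symm_apply]
  exact hℓ2 y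

lemma hb_opial {H : Type*} [NormedAddCommGroup H] [InnerProductSpace ℝ H] [CompleteSpace H]
    (Φ : H → ℝ) (Φ' : H → H) (Φstar : ℝ)
    (hΦconv : ConvexOn ℝ Set.univ Φ)
    (hΦdiff : ∀ u : H, HasGradientAt Φ (Φ' u) u)
    (hargmin : {v : H | ∀ u, Φ v ≤ Φ u}.Nonempty)
    (hΦstar : ∀ v ∈ {v : H | ∀ u, Φ v ≤ Φ u}, Φ v = Φstar) (x : ℝ → H)
    (h1 : Tendsto (fun t => Φ (x t)) atTop (nhds Φstar))
    (h2 : ∀ v ∈ {v : H | ∀ u, Φ v ≤ Φ u}, ∃ L,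
      Tendsto (fun t => ‖x t - v‖ ^ 2) atTop (nhds L)) :
    ∃ xstar ∈ {v : H | ∀ u, Φ v ≤ Φ u},
      ∀ y : H, Tendsto (fun t => ⟪x t, y⟫) atTop (nhds ⟪xstar, y⟫) := by
  obtain ⟨v, hv⟩ := hargmin
  obtain ⟨L, hL⟩ := h2 v hv
  have hbd : ∀ᶠ t in atTop, ‖x t‖ ≤ ‖v‖ + (1 + (L + 1)) := by
    filter_upwards [hL.eventually (gt_mem_nhds (lt_add_one L))] with t ht
    have h3 : ‖x t - v‖ ≤ 1 + (L + 1) := by nlinarith [sq_nonneg (‖x t - v‖ - 1)]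
    have h4 : ‖x t‖ ≤ ‖x t - v‖ + ‖v‖ := by
      simpa using norm_add_le (x t - v) v
    linarith
  have key : ∀ U : Ultrafilter ℝ, (U : Filter ℝ) ≤ atTop → ∃ p ∈ {v : H | ∀ u, Φ v ≤ Φ u},
      ∀ y : H, Tendsto (fun t => ⟪x t, y⟫) (U : Filter ℝ) (nhds ⟪p, y⟫) := by
    intro U hU
    obtain ⟨p, hp⟩ := hb_ultra x U _ (hU hbd)
    refine ⟨p, ?_, hp⟩
    have h3 : Tendsto (fun t => Φ p + ⟪Φ' p, x t - p⟫) (U : Filter ℝ) (nhds (Φ p)) := by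
      have h4 := ((hp (Φ' p)).sub_const ⟪p, Φ' p⟫).const_add (Φ p)
      simp only [sub_self, add_zero] at h4
      refine h4.congr fun t => ?_
      rw [inner_sub_right, real_inner_comm (Φ' p) (x t), real_inner_comm (Φ' p) p]
    have h5 : Φ p ≤ Φstar := le_of_tendsto_of_tendsto h3 (h1.mono_left hU)
      (Eventually.of_forall fun t => hb_grad Φ Φ' hΦconv hΦdiff p (x t))
    intro u
    rw [← hΦstar v hv] at h5
    exact h5.trans (hv u)
  have uniq : ∀ U V : Ultrafilter ℝ, (U : Filter ℝ) ≤ atTop → (V : Filter ℝ) ≤ atTop →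
      ∀ p ∈ {v : H | ∀ u, Φ v ≤ Φ u}, ∀ q ∈ {v : H | ∀ u, Φ v ≤ Φ u},
      (∀ y : H, Tendsto (fun t => ⟪x t, y⟫) (U : Filter ℝ) (nhds ⟪p, y⟫)) →
      (∀ y : H, Tendsto (fun t => ⟪x t, y⟫) (V : Filter ℝ) (nhds ⟪q, y⟫)) → p = q := by
    intro U V hU hV p hp q hq hpU hqV
    obtain ⟨A, hA⟩ := h2 p hp
    obtain ⟨B, hB⟩ := h2 q hq
    have h3 : Tendsto (fun t => ⟪x t, p - q⟫) atTop
        (nhds ((B - A + (‖p‖ ^ 2 - ‖q‖ ^ 2)) / 2)) := by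
      refine (((hB.sub hA).add_const (‖p‖ ^ 2 - ‖q‖ ^ 2)).div_const 2).congr fun t => ?_
      rw [norm_sub_sq_real, norm_sub_sq_real, inner_sub_right]
      ring
    have e1 := tendsto_nhds_unique (hpU (p - q)) (h3.mono_left hU)
    have e2 := tendsto_nhds_unique (hqV (p - q)) (h3.mono_left hV)
    have e3 : ⟪p - q, p - q⟫ = 0 := by rw [inner_sub_left, e1, e2, sub_self]
    exact sub_eq_zero.1 (inner_self_eq_zero.1 e3)
  obtain ⟨p, hp, hpU⟩ := key (Ultrafilter.of atTop) (Ultrafilter.of_le atTop)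
  refine ⟨p, hp, fun y => ?_⟩
  rw [tendsto_iff_ultrafilter]
  intro V hV
  obtain ⟨q, hq, hqV⟩ := key V hV
  rw [uniq _ V (Ultrafilter.of_le atTop) hV p hp q hq hpU hqV]
  exact hqV y

theorem heavy_ball_weak_convergence
    {H : Type*} [NormedAddCommGroup H] [InnerProductSpace ℝ H] [CompleteSpace H]
    (c α : ℝ) (hc : 0 < c) (hα0 : 0 ≤ α) (hα1 : α < 1)
    (Φ : H → ℝ) (Φ' : H → H) (Φstar : ℝ)
    (hΦconv : ConvexOn ℝ Set.univ Φ)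
    (hΦdiff : ∀ u : H, HasGradientAt Φ (Φ' u) u)
    (hΦcont : Continuous Φ')
    (hargmin : {v : H | ∀ u, Φ v ≤ Φ u}.Nonempty)
    (hΦstar : ∀ v ∈ {v : H | ∀ u, Φ v ≤ Φ u}, Φ v = Φstar)
    (g : ℝ → H) (hg : IntegrableOn g (Ici (0:ℝ)))
    (x x' x'' : ℝ → H)
    (hx1 : ∀ t ∈ Ici (0:ℝ), HasDerivAt x (x' t) t)
    (hx2 : ∀ t ∈ Ici (0:ℝ), HasDerivAt x' (x'' t) t)
    (hode : ∀ t ∈ Ici (0:ℝ),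
      x'' t + (c / (1 + t) ^ α) • x' t + Φ' (x t) = g t)
    (hgα : IntegrableOn (fun t => (1 + t) ^ α * ‖g t‖) (Ici (0:ℝ))) :
    ∃ xstar ∈ {v : H | ∀ u, Φ v ≤ Φ u},
      ∀ y : H, Tendsto (fun t => ⟪x t, y⟫) atTop (nhds ⟪xstar, y⟫) := by
  have hlim : Tendsto (fun t : ℝ => α * (1 + t) ^ (α - 1)) atTop (nhds 0) := by
    have h1 := (tendsto_rpow_neg_atTop (y := 1 - α) (by linarith)).comp
      (tendsto_atTop_add_const_left atTop (1 : ℝ) tendsto_id)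
    have h2 := h1.const_mul α
    simpa [Function.comp_def] using h2
  obtain ⟨T₀, hT₀⟩ := eventually_atTop.1
    (hlim.eventually (gt_mem_nhds (by positivity : 0 < c / 24)))
  set T := max T₀ 1 with hTdef
  have hT1 : 1 ≤ T := le_max_right _ _
  have hT0 : ∀ t, T ≤ t → 0 ≤ t := fun t ht => by linarith
  have hld : ∀ t, T ≤ t → HasDerivAt (fun t : ℝ => (1 + t) ^ α) (α * (1 + t) ^ (α - 1)) t := by
    intro t ht
    have h1 : HasDerivAt (fun t : ℝ => 1 + t) 1 t := (hasDerivAt_id t).const_add 1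
    have h2 := h1.rpow_const (p := α) (Or.inl (by linarith : 1 + t ≠ 0))
    simpa using h2
  have main : ∀ v ∈ {v : H | ∀ u, Φ v ≤ Φ u},
      Tendsto (fun t => Φ (x t) - Φstar) atTop (nhds 0) ∧
      ∃ L, Tendsto (fun t => ‖x t - v‖ ^ 2) atTop (nhds L) := by
    intro v hv
    have hΦd : ∀ t, T ≤ t → HasDerivAt (fun t => Φ (x t)) ⟪Φ' (x t), x' t⟫ t := by
      intro t ht
      have := (hΦdiff (x t)).hasFDerivAt.comp_hasDerivAt t (hx1 t (hT0 t ht))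
      simpa [Function.comp_def] using this
    have hxv : ∀ t, T ≤ t → HasDerivAt (fun t => x t - v) (x' t) t := fun t ht =>
      (hx1 t (hT0 t ht)).sub_const v
    have hode2 : ∀ t, T ≤ t → x'' t = g t - (c / (1 + t) ^ α) • x' t - Φ' (x t) := by
      intro t ht
      rw [← hode t (hT0 t ht)]; abel
    have hlpos : ∀ t, T ≤ t → 0 < (1 + t) ^ α := fun t ht =>
      rpow_pos_of_pos (by linarith) _
    refine hb_core c T (fun t => (1 + t) ^ α) (fun t => α * (1 + t) ^ (α - 1)) (fun t => ‖x' t‖)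
      (fun t => ‖x t - v‖) (fun t => Φ (x t) - Φstar) (fun t => ‖g t‖) (fun t => ⟪x' t, x t - v⟫)
      (fun t => α ^ 2 * (t + 1) ^ (α - 2))
      (fun t => (2 * (1 + t) ^ α * (α * (1 + t) ^ (α - 1))) *
          (‖x' t‖ ^ 2 / 2 + (Φ (x t) - Φstar))
        + ((1 + t) ^ α) ^ 2 * (2 * ⟪x' t, x'' t⟫ / 2 + ⟪Φ' (x t), x' t⟫))
      (fun t => α * (1 + t) ^ (α - 1) * ⟪x' t, x t - v⟫
        + (1 + t) ^ α * (⟪x' t, x' t⟫ + ⟪x'' t, x t - v⟫)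
        + c / 2 * (2 * ⟪x t - v, x' t⟫))
      hc hT1 ?_ ?_ ?_ ?_ ?_ ?_ ?_ ?_ ?_ ?_ ?_ ?_ ?_ ?_ ?_ ?_ ?_ ?_ ?_
    · intro t ht
      exact one_le_rpow (by linarith) hα0
    · intro t ht
      calc (1 + t) ^ α ≤ (1 + t) ^ (1 : ℝ) := rpow_le_rpow_of_exponent_le (by linarith) hα1.le
        _ = 1 + t := rpow_one _
        _ ≤ 2 * t := by linarith
    · intro t ht
      exact mul_nonneg hα0 (rpow_nonneg (by linarith) _)
    · intro t ht
      exact (hT₀ t ((le_max_left _ _).trans ht)).le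
    · exact fun t _ => norm_nonneg _
    · exact fun t _ => norm_nonneg _
    · intro t _
      rw [← hΦstar v hv]
      exact sub_nonneg.2 (hv _)
    · exact fun t _ => norm_nonneg _
    · exact fun t _ => abs_real_inner_le_norm _ _
    · intro t ht
      have hp : 0 < 1 + t := by linarith
      have e1 : (1 + t) ^ α * (1 + t) ^ (α - 2) = ((1 + t) ^ (α - 1)) ^ 2 := by
        rw [pow_two, ← rpow_add hp, ← rpow_add hp]; congr 1; ring
      rw [mul_pow, ← e1, add_comm t 1]; ring
    · intro t ht
      have h1 := (hld t ht).pow 2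
      have h2 := (((hx2 t (hT0 t ht)).norm_sq).div_const 2).add ((hΦd t ht).sub_const Φstar)
      have h3 := h1.mul h2
      refine h3.congr_deriv ?_
      simp
    · intro t ht
      have h1 := (hx2 t (hT0 t ht)).inner ℝ (hxv t ht)
      have h2 := (hxv t ht).norm_sq
      exact ((hld t ht).mul h1).add (h2.const_mul (c / 2))
    · intro t ht
      have hl := hlpos t ht
      have e1 : 2 * ⟪x' t, x'' t⟫ / 2 + ⟪Φ' (x t), x' t⟫
          = ⟪x' t, g t⟫ - c / (1 + t) ^ α * ‖x' t‖ ^ 2 := by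
        rw [hode2 t ht, inner_sub_right, inner_sub_right, inner_smul_right,
          real_inner_self_eq_norm_sq, real_inner_comm (x' t) (Φ' (x t))]
        ring
      have h1 : ⟪x' t, g t⟫ ≤ ‖x' t‖ * ‖g t‖ := real_inner_le_norm _ _
      have h2 := mul_le_mul_of_nonneg_left h1 (sq_nonneg ((1 + t) ^ α))
      have e2 : ((1 + t) ^ α) ^ 2 * (c / (1 + t) ^ α * ‖x' t‖ ^ 2)
          = c * (1 + t) ^ α * ‖x' t‖ ^ 2 := by field_simp
      simp only [e1, mul_sub, e2]
      linarith
    · intro t ht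
      have hl := hlpos t ht
      have e1 : ⟪x'' t, x t - v⟫ = ⟪g t, x t - v⟫ - c / (1 + t) ^ α * ⟪x' t, x t - v⟫
          - ⟪Φ' (x t), x t - v⟫ := by
        rw [hode2 t ht, inner_sub_left, inner_sub_left, real_inner_smul_left]
      have h1 : ⟪g t, x t - v⟫ ≤ ‖g t‖ * ‖x t - v‖ := real_inner_le_norm _ _
      have h2 : Φ (x t) - Φstar ≤ ⟪Φ' (x t), x t - v⟫ := by
        have h3 := hb_grad Φ Φ' hΦconv hΦdiff (x t) v
        rw [hΦstar v hv, ← neg_sub (x t) v, inner_neg_right] at h3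
        linarith
      have h4 := mul_le_mul_of_nonneg_left h1 hl.le
      have h5 := mul_le_mul_of_nonneg_left h2 hl.le
      have e2 : (1 + t) ^ α * (c / (1 + t) ^ α * ⟪x' t, x t - v⟫) = c * ⟪x' t, x t - v⟫ := by
        field_simp
      have e3 : ⟪x t - v, x' t⟫ = ⟪x' t, x t - v⟫ := real_inner_comm _ _
      have e4 : (1 + t) ^ α * (⟪x' t, x' t⟫ + ⟪x'' t, x t - v⟫) = (1 + t) ^ α * ‖x' t‖ ^ 2
          + (1 + t) ^ α * ⟪g t, x t - v⟫ - c * ⟪x' t, x t - v⟫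
          - (1 + t) ^ α * ⟪Φ' (x t), x t - v⟫ := by
        rw [e1, real_inner_self_eq_norm_sq, ← e2]; ring
      simp only [e3, e4]
      linarith
    · intro t ht
      exact (hx2 t (hT0 t ht)).continuousAt.norm.continuousWithinAt
    · intro t ht
      exact ((hΦd t ht).continuousAt.sub continuousAt_const).continuousWithinAt
    · intro t ht
      exact (hld t ht).continuousAt.continuousWithinAt
    · rw [integrableOn_Ici_iff_integrableOn_Ioi]
      exact (integrableOn_add_rpow_Ioi_of_lt (by linarith) (by linarith)).const_mul _
    · exact hgα.mono_set (fun t ht => hT0 t ht)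
  obtain ⟨v, hv⟩ := id hargmin
  refine hb_opial Φ Φ' Φstar hΦconv hΦdiff hargmin hΦstar x ?_ (fun v hv => (main v hv).2)
  simpa using (main v hv).1.add_const Φstar
end

section
/- Let x be a solution of the heavy ball equation with vanishing damping and source term g satisfying ∫₀^∞ (1+t)^α ‖g(t)‖ dt < ∞. Then the energy function W(t) = ½‖x'(t)‖² + Φ(x(t)) − Φ* satisfies W(t) = O(1/t^{2α}) as t → +∞, i.e. sup_{t≥1} t^{2α} W(t) < ∞. -/
open MeasureTheory Filter Real Set RealInnerProductSpace

lemma hb_grad_ineq {H : Type*} [NormedAddCommGroup H] [InnerProductSpace ℝ H] [CompleteSpace H]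
    (Φ : H → ℝ) (hΦconv : ConvexOn ℝ Set.univ Φ) (u d z : H)
    (h : HasGradientAt Φ d u) : Φ u - Φ z ≤ ⟪u - z, d⟫ := by
  have hl : HasDerivAt (fun t : ℝ => u + t • (z - u)) (z - u) 0 := by
    simpa using ((hasDerivAt_id (0:ℝ)).smul_const (z - u)).const_add u
  have hf : HasDerivAt (Φ ∘ (fun t : ℝ => u + t • (z - u))) (⟪d, z - u⟫) 0 := by
    have := h.hasFDerivAt.comp_hasDerivAt_of_eq (0:ℝ) hl (by simp)
    simpa using this
  have hc : ConvexOn ℝ Set.univ (Φ ∘ (fun t : ℝ => u + t • (z - u))) := by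
    refine ⟨convex_univ, ?_⟩
    intro s _ t _ a b ha hb hab
    have := hΦconv.2 (mem_univ (u + s • (z - u))) (mem_univ (u + t • (z - u))) ha hb hab
    have e : a • (u + s • (z - u)) + b • (u + t • (z - u))
        = u + (a • s + b • t) • (z - u) := by
      have : u = (a + b) • u := by rw [hab, one_smul]
      nth_rw 5 [this]
      simp only [smul_eq_mul]
      module
    rw [e] at this
    exact this
  have := hc.le_slope_of_hasDerivAt (mem_univ _) (mem_univ _) zero_lt_one hf
  simp only [slope_def_field, Function.comp] at this
  simp at this
  have e2 : ⟪u - z, d⟫ = - ⟪d, z - u⟫ := by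
    rw [real_inner_comm, ← inner_neg_right, neg_sub]
  rw [e2]; linarith

lemma hb_lower (c r P n b yv φ : ℝ) (hc : 0 < c) (hr : 0 < r)
    (hP1 : P ≤ c / 8) (hyv : |yv| ≤ b * n) :
    r ^ 2 * φ + (r * n) ^ 2 / 6 + c ^ 2 * b ^ 2 / 32 ≤
      r ^ 2 * (n ^ 2 / 2 + φ) + c / 2 * (r * yv) + (c / 2 * (c - P)) * (b ^ 2 / 2) := by
  have h1 : -(b * n) ≤ yv := by linarith [neg_abs_le yv]
  have h2 : c / 2 * r * (-(b * n)) ≤ c / 2 * r * yv := by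
    apply mul_le_mul_of_nonneg_left h1; positivity
  have h3 : c / 2 * (c - c / 8) * (b ^ 2 / 2) ≤ c / 2 * (c - P) * (b ^ 2 / 2) := by
    gcongr
  nlinarith [sq_nonneg (4 * (r * n) - 3 * (c * b)), h2, h3]

lemma hb_upper (c r P Q n b yv φ yD vD vg yg G va ya : ℝ) (hc : 0 < c) (hr : 0 < r)
    (hP1 : P ≤ c / 8) (hφ : 0 ≤ φ)
    (hyD : φ ≤ yD) (hvg : vg ≤ n * G) (hyg : yg ≤ b * G)
    (hva : va = vg - c / r * n ^ 2 - vD) (hya : ya = yg - c / r * yv - yD) :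
    2 * r * P * (n ^ 2 / 2 + φ) + r ^ 2 * (va + vD) + c / 2 * (P * yv + r * (n ^ 2 + ya))
      + (c / 2 * Q * (b ^ 2 / 2) + c / 2 * (c - P) * yv)
      ≤ c / 4 * Q * b ^ 2 + r * G * (r * n + c / 2 * b) := by
  subst hva hya
  have e : 2 * r * P * (n ^ 2 / 2 + φ) + r ^ 2 * ((vg - c / r * n ^ 2 - vD) + vD)
      + c / 2 * (P * yv + r * (n ^ 2 + (yg - c / r * yv - yD)))
      + (c / 2 * Q * (b ^ 2 / 2) + c / 2 * (c - P) * yv)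
      = r * n ^ 2 * (P - c / 2) + r * (2 * P * φ - c / 2 * yD) + r ^ 2 * vg + c / 2 * r * yg
        + c / 4 * Q * b ^ 2 := by
    field_simp
    ring
  rw [e]
  have h1 : r * n ^ 2 * (P - c / 2) ≤ 0 :=
    mul_nonpos_of_nonneg_of_nonpos (by positivity) (by linarith)
  have h2 : r * (2 * P * φ - c / 2 * yD) ≤ 0 := by
    apply mul_nonpos_of_nonneg_of_nonpos hr.le
    nlinarith
  have h3 : r ^ 2 * vg ≤ r ^ 2 * (n * G) := by gcongr
  have h4 : c / 2 * r * yg ≤ c / 2 * r * (b * G) := by gcongr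
  linarith

lemma hb_upper2 (c r Q n b φ G E D : ℝ) (hc : 0 < c) (hr : 0 < r) (hQ : 0 ≤ Q)
    (hφ : 0 ≤ φ) (hG : 0 ≤ G)
    (hE : r ^ 2 * φ + (r * n) ^ 2 / 6 + c ^ 2 * b ^ 2 / 32 ≤ E)
    (hD : D ≤ c / 4 * Q * b ^ 2 + r * G * (r * n + c / 2 * b)) :
    D ≤ (8 / c * Q + 7 * (r * G)) * (E + 1) := by
  have h0 : 0 ≤ r ^ 2 * φ := by positivity
  have h1 : r * n + c / 2 * b ≤ 7 * (E + 1) := by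
    nlinarith [sq_nonneg (r * n - 1), sq_nonneg (c * b / 2 - 1), sq_nonneg (r * n),
      sq_nonneg (c * b)]
  have h2 : r * G * (r * n + c / 2 * b) ≤ r * G * (7 * (E + 1)) := by gcongr
  have h3 : c ^ 2 * b ^ 2 / 32 ≤ E + 1 := by nlinarith [sq_nonneg (r * n)]
  have h4 : 8 / c * Q * (c ^ 2 * b ^ 2 / 32) ≤ 8 / c * Q * (E + 1) := by gcongr
  have h5 : 8 / c * Q * (c ^ 2 * b ^ 2 / 32) = c / 4 * Q * b ^ 2 := by
    field_simp; ring
  linarith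

theorem heavy_ball_energy_big_O
    {H : Type*} [NormedAddCommGroup H] [InnerProductSpace ℝ H] [CompleteSpace H]
    (c α : ℝ) (hc : 0 < c) (hα0 : 0 ≤ α) (hα1 : α < 1)
    (Φ : H → ℝ) (Φ' : H → H) (Φstar : ℝ)
    (hΦconv : ConvexOn ℝ Set.univ Φ)
    (hΦdiff : ∀ u : H, HasGradientAt Φ (Φ' u) u)
    (hΦcont : Continuous Φ')
    (hargmin : {v : H | ∀ u, Φ v ≤ Φ u}.Nonempty)
    (hΦstar : ∀ v ∈ {v : H | ∀ u, Φ v ≤ Φ u}, Φ v = Φstar)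
    (g : ℝ → H) (hg : IntegrableOn g (Ici (0:ℝ)))
    (x x' x'' : ℝ → H)
    (hx1 : ∀ t ∈ Ici (0:ℝ), HasDerivAt x (x' t) t)
    (hx2 : ∀ t ∈ Ici (0:ℝ), HasDerivAt x' (x'' t) t)
    (hode : ∀ t ∈ Ici (0:ℝ),
      x'' t + (c / (1 + t) ^ α) • x' t + Φ' (x t) = g t)
    (hgα : IntegrableOn (fun t => (1 + t) ^ α * ‖g t‖) (Ici (0:ℝ))) :
    ∃ M : ℝ, ∀ t ≥ (1:ℝ),
      t ^ (2 * α) * (‖x' t‖ ^ 2 / 2 + Φ (x t) - Φstar) ≤ M := by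
  obtain ⟨z, hz⟩ := hargmin
  have hzs : Φ z = Φstar := hΦstar z hz
  have hφ0 : ∀ u, 0 ≤ Φ u - Φstar := fun u => by have := hz u; linarith
  have hxΦ : ∀ t ≥ (0:ℝ), HasDerivAt (fun t => Φ (x t)) (⟪x' t, Φ' (x t)⟫) t := by
    intro t ht
    have := (hΦdiff (x t)).hasFDerivAt.comp_hasDerivAt t (hx1 t ht)
    have h2 : HasDerivAt (Φ ∘ x) (⟪Φ' (x t), x' t⟫) t := by simpa using this
    rw [real_inner_comm]
    exact h2
  -- choose T
  have hlim : Tendsto (fun t : ℝ => α * (1 + t) ^ (α - 1)) atTop (nhds (α * 0)) := by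
    have h1 := tendsto_rpow_neg_atTop (y := 1 - α) (by linarith)
    have h2 := h1.comp (tendsto_atTop_add_const_left atTop (1:ℝ) tendsto_id)
    have h3 : Tendsto (fun t : ℝ => (1 + t) ^ (α - 1)) atTop (nhds 0) := by
      refine h2.congr ?_
      intro t
      simp
    exact h3.const_mul α
  rw [mul_zero] at hlim
  obtain ⟨T0, hT0⟩ := eventually_atTop.1 (hlim.eventually_le_const (show (0:ℝ) < c / 8 by positivity))
  set T := max T0 1 with hT
  have hT1 : 1 ≤ T := le_max_right _ _
  set E : ℝ → ℝ := fun t => ((1 + t) ^ α) ^ 2 * (‖x' t‖ ^ 2 / 2 + (Φ (x t) - Φstar))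
      + c / 2 * ((1 + t) ^ α * ⟪x t - z, x' t⟫)
      + (c / 2 * (c - α * (1 + t) ^ (α - 1))) * (‖x t - z‖ ^ 2 / 2) with hEdef
  have hElow : ∀ t ≥ T, ((1 + t) ^ α) ^ 2 * (Φ (x t) - Φstar) + ((1 + t) ^ α * ‖x' t‖) ^ 2 / 6
      + c ^ 2 * ‖x t - z‖ ^ 2 / 32 ≤ E t := by
    intro t ht
    have ht0 : 0 < 1 + t := by linarith
    exact hb_lower c _ _ _ _ _ _ hc (rpow_pos_of_pos ht0 α) (hT0 t ((le_max_left _ _).trans ht))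
      (abs_real_inner_le_norm _ _)
  have hE0 : ∀ t ≥ T, 0 < E t + 1 := by
    intro t ht
    have := hElow t ht
    have h1 : 0 ≤ ((1 + t) ^ α) ^ 2 * (Φ (x t) - Φstar) := mul_nonneg (sq_nonneg _) (hφ0 _)
    have h2 : 0 ≤ c ^ 2 * ‖x t - z‖ ^ 2 / 32 := by positivity
    have h3 : 0 ≤ ((1 + t) ^ α * ‖x' t‖) ^ 2 / 6 := by positivity
    linarith
  have hpd : ∀ t ≥ T, HasDerivAt (fun t : ℝ => (1 + t) ^ (α - 1))
      (-((1 - α) * (1 + t) ^ (α - 1 - 1))) t := by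
    intro t ht
    have h := ((hasDerivAt_id' t).const_add 1).rpow_const (p := α - 1)
      (Or.inl (by linarith))
    convert h using 1
    ring
  have hrd : ∀ t ≥ T, HasDerivAt (fun t : ℝ => (1 + t) ^ α)
      (α * (1 + t) ^ (α - 1)) t := by
    intro t ht
    have h := ((hasDerivAt_id' t).const_add 1).rpow_const (p := α)
      (Or.inl (by linarith))
    convert h using 1
    ring
  have hEd : ∀ t ≥ T, ∃ D, HasDerivAt E D t ∧
      D ≤ (8 / c * (α * ((1 - α) * (1 + t) ^ (α - 1 - 1))) + 7 * ((1 + t) ^ α * ‖g t‖))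
        * (E t + 1) := by
    intro t ht
    have htz : (0:ℝ) ≤ t := by linarith
    have ht0 : 0 < 1 + t := by linarith
    have hr : 0 < (1 + t) ^ α := rpow_pos_of_pos ht0 α
    have hy := (hx1 t htz).sub_const z
    have hv := hx2 t htz
    have dv2 := hv.norm_sq
    have dy2 := hy.norm_sq
    have dyv := hy.inner ℝ hv
    have d1 := ((hrd t ht).pow 2).mul ((dv2.div_const 2).add ((hxΦ t htz).sub_const Φstar))
    have d2 := ((hrd t ht).mul dyv).const_mul (c / 2)
    have d3 := ((((hpd t ht).const_mul α).const_sub c).const_mul (c / 2)).mul (dy2.div_const 2)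
    refine ⟨_, (d1.add d2).add d3, ?_⟩
    have ha : x'' t = g t - (c / (1 + t) ^ α) • x' t - Φ' (x t) := by
      rw [← hode t htz]; abel
    have hva : ⟪x' t, x'' t⟫ = ⟪x' t, g t⟫ - c / (1 + t) ^ α * ‖x' t‖ ^ 2
        - ⟪x' t, Φ' (x t)⟫ := by
      rw [ha, inner_sub_right, inner_sub_right, inner_smul_right, real_inner_self_eq_norm_sq]
    have hya : ⟪x t - z, x'' t⟫ = ⟪x t - z, g t⟫ - c / (1 + t) ^ α * ⟪x t - z, x' t⟫
        - ⟪x t - z, Φ' (x t)⟫ := by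
      rw [ha, inner_sub_right, inner_sub_right, inner_smul_right]
    have hQ : 0 ≤ α * ((1 - α) * (1 + t) ^ (α - 1 - 1)) :=
      mul_nonneg hα0 (mul_nonneg (by linarith) (rpow_nonneg ht0.le _))
    have hup := hb_upper c _ (α * (1 + t) ^ (α - 1)) (α * ((1 - α) * (1 + t) ^ (α - 1 - 1)))
      ‖x' t‖ ‖x t - z‖ ⟪x t - z, x' t⟫ (Φ (x t) - Φstar) ⟪x t - z, Φ' (x t)⟫
      ⟪x' t, Φ' (x t)⟫ ⟪x' t, g t⟫ ⟪x t - z, g t⟫ ‖g t‖ _ _ hc hr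
      (hT0 t ((le_max_left _ _).trans ht)) (hφ0 _)
      (by rw [← hzs]; exact hb_grad_ineq Φ hΦconv _ _ _ (hΦdiff _))
      (real_inner_le_norm _ _) (real_inner_le_norm _ _) hva hya
    refine hb_upper2 c _ _ _ _ _ _ _ _ hc hr hQ (hφ0 _) (norm_nonneg _) (hElow t ht)
      (le_trans (le_of_eq ?_) hup)
    rw [real_inner_self_eq_norm_sq]
    simp only [Pi.add_apply, Pi.pow_apply, Nat.cast_ofNat]
    ring
  choose! D hD1 hD2 using hEd
  set F : ℝ → ℝ := fun t => Real.log (E t + 1) + 8 / c * α * (1 + t) ^ (α - 1) with hF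
  have hFd : ∀ t ≥ T, HasDerivAt F
      (D t / (E t + 1) + 8 / c * α * (-((1 - α) * (1 + t) ^ (α - 1 - 1)))) t := by
    intro t ht
    exact (((hD1 t ht).add_const 1).log (hE0 t ht).ne').add ((hpd t ht).const_mul _)
  have hgi : IntegrableOn (fun t => 7 * ((1 + t) ^ α * ‖g t‖)) (Ici (0:ℝ)) := hgα.const_mul 7
  set I := ∫ t in Ici (0:ℝ), 7 * ((1 + t) ^ α * ‖g t‖) with hI
  have hFb : ∀ t ≥ T, F t ≤ F T + I := by
    intro t ht
    have hsub : Icc T t ⊆ Ici (0:ℝ) := fun s hs => by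
      have := hs.1; simp only [mem_Ici]; linarith
    have h1 := intervalIntegral.sub_le_integral_of_hasDeriv_right_of_le ht
      (fun s hs => (hFd s hs.1).continuousAt.continuousWithinAt)
      (fun s hs => (hFd s hs.1.le).hasDerivWithinAt) (hgi.mono_set hsub)
      (fun s hs => by
        have h1 := hD2 s hs.1.le
        have h2 := (div_le_iff₀ (hE0 s hs.1.le)).2 h1
        linarith)
    rw [intervalIntegral.integral_of_le ht] at h1
    have h2 : ∫ s in Ioc T t, 7 * ((1 + s) ^ α * ‖g s‖) ≤ I := by
      refine setIntegral_mono_set hgi ?_ ?_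
      · refine (ae_restrict_mem measurableSet_Ici).mono ?_
        intro s hs
        have : (0:ℝ) ≤ 1 + s := by simp only [mem_Ici] at hs; linarith
        simp only [Pi.zero_apply]
        have := rpow_nonneg this α
        positivity
      · exact (Ioc_subset_Icc_self.trans hsub).eventuallyLE
    linarith
  have hcont : ContinuousOn (fun t => t ^ (2 * α) * (‖x' t‖ ^ 2 / 2 + Φ (x t) - Φstar))
      (Icc 1 T) := by
    intro t ht
    have ht0 : (0:ℝ) ≤ t := by linarith [ht.1]
    refine ContinuousAt.continuousWithinAt ?_
    have h1 := (hx2 t ht0).continuousAt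
    have h2 := (hxΦ t ht0).continuousAt
    have h3 : ContinuousAt (fun t : ℝ => t ^ (2 * α)) t :=
      continuousAt_rpow_const _ _ (Or.inl (by linarith [ht.1]))
    exact h3.mul ((((h1.norm).pow 2).div_const 2).add h2 |>.sub continuousAt_const)
  obtain ⟨M1, hM1⟩ := (isCompact_Icc.image_of_continuousOn hcont).bddAbove
  refine ⟨max M1 (3 * Real.exp (F T + I)), ?_⟩
  intro t ht
  rcases le_total t T with h | h
  · exact le_max_of_le_left (hM1 ⟨t, ⟨ht, h⟩, rfl⟩)
  · apply le_max_of_le_right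
    have ht0 : 0 < 1 + t := by linarith
    have hl : Real.log (E t + 1) ≤ F T + I := by
      have := hFb t h
      have h2 : 0 ≤ 8 / c * α * (1 + t) ^ (α - 1) := by
        have := rpow_nonneg ht0.le (α - 1)
        positivity
      simp only [hF] at this ⊢
      linarith
    have hEe : E t + 1 ≤ Real.exp (F T + I) := (Real.log_le_iff_le_exp (hE0 t h)).1 hl
    have hlow := hElow t h
    have hr2 : t ^ (2 * α) ≤ ((1 + t) ^ α) ^ 2 := by
      rw [← rpow_natCast, ← rpow_mul ht0.le, mul_comm α]
      push_cast
      exact rpow_le_rpow (by linarith) (by linarith) (by linarith)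
    have hW : 0 ≤ ‖x' t‖ ^ 2 / 2 + Φ (x t) - Φstar := by
      have := hφ0 (x t)
      have : 0 ≤ ‖x' t‖ ^ 2 / 2 := by positivity
      linarith
    have h1 := mul_le_mul_of_nonneg_right hr2 hW
    have h2 : 0 ≤ ((1 + t) ^ α) ^ 2 * (Φ (x t) - Φstar) := mul_nonneg (sq_nonneg _) (hφ0 _)
    have h3 : 0 ≤ c ^ 2 * ‖x t - z‖ ^ 2 / 32 := by positivity
    nlinarith
end

section
/- Let x be a solution of the heavy ball equation with vanishing damping and source term g satisfying ∫₀^∞ (1+t)^α ‖g(t)‖ dt < ∞. Then the energy function W(t) = ½‖x'(t)‖² + Φ(x(t)) − Φ* satisfies ∫₀^∞ (1+t)^α W(t) dt < ∞. -/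
open MeasureTheory Filter Real Set RealInnerProductSpace

lemma hb_alg (c E F G I K m D : ℝ) (hc : 0 < c)
    (h1 : m ^ 2 / 2 ≤ E + c / 114 * I + G * m)
    (h2 : c * K ≤ E + c / 114 * I + G * m)
    (h3 : c * D ^ 2 / 4 ≤ F + 3 / 2 * K + (G + m) * D)
    (h4 : I ≤ F + 3 / 2 * K + (G + m) * D + c * D ^ 2 / 16) :
    I ≤ 6 * (F + 19 / c * (E + G ^ 2) + 4 * G ^ 2 / c) := by
  have hm : m ^ 2 ≤ 4 * (E + c / 114 * I + G ^ 2) := by nlinarith [sq_nonneg (m / 2 - G)]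
  have hK : c * K ≤ 2 * (E + c / 114 * I + G ^ 2) := by nlinarith [sq_nonneg (m / 2 - G)]
  have hD : (G + m) * D ≤ c * D ^ 2 / 8 + 2 * (G + m) ^ 2 / c := by
    have : c * D ^ 2 / 8 + 2 * (G + m) ^ 2 / c - (G + m) * D
        = (c * D - 4 * (G + m)) ^ 2 / (8 * c) := by field_simp; ring
    have h : 0 ≤ (c * D - 4 * (G + m)) ^ 2 / (8 * c) := by positivity
    linarith
  set P := 2 * (G + m) ^ 2 / c with hP
  have hPc : c * P = 2 * (G + m) ^ 2 := by rw [hP]; field_simp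
  have hPc' : c * P ≤ 4 * G ^ 2 + 4 * m ^ 2 := by rw [hPc]; nlinarith [sq_nonneg (G - m)]
  have hR : c * D ^ 2 / 8 ≤ F + 3 / 2 * K + P := by linarith
  have hD0 : 0 ≤ c * D ^ 2 := by positivity
  have hI : I ≤ 3 * (F + 3 / 2 * K + P) := by linarith
  have hcI : c * I ≤ 3 * (c * F + 3 / 2 * (c * K) + c * P) := by nlinarith
  have h5 : c * I ≤ 6 * (c * F + 19 * (E + G ^ 2) + 4 * G ^ 2) := by linarith
  have h6 : c * (6 * (F + 19 / c * (E + G ^ 2) + 4 * G ^ 2 / c))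
      = 6 * (c * F + 19 * (E + G ^ 2) + 4 * G ^ 2) := by field_simp
  rw [← h6] at h5
  exact le_of_mul_le_mul_left h5 hc

lemma hb_convex {H : Type*} [NormedAddCommGroup H] [InnerProductSpace ℝ H] [CompleteSpace H]
    (Φ : H → ℝ) (hΦconv : ConvexOn ℝ Set.univ Φ) (u v p : H) (h : HasGradientAt Φ p u) :
    ⟪p, v - u⟫ ≤ Φ v - Φ u := by
  have hconv : ConvexOn ℝ Set.univ (fun s : ℝ => Φ (u + s • (v - u))) := by
    have := hΦconv.comp_affineMap (AffineMap.lineMap u v : ℝ →ᵃ[ℝ] H)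
    refine ConvexOn.congr (by simpa using this) ?_
    intro s _
    simp [AffineMap.lineMap_apply, add_comm]
  have hd : HasDerivAt (fun s : ℝ => Φ (u + s • (v - u))) ⟪p, v - u⟫ 0 := by
    have h1 : HasDerivAt (fun s : ℝ => u + s • (v - u)) (v - u) 0 := by
      simpa using ((hasDerivAt_id (0:ℝ)).smul_const (v - u)).const_add u
    have h2 : HasFDerivAt Φ (InnerProductSpace.toDual ℝ H p) (u + (0:ℝ) • (v - u)) := by
      simpa using h.hasFDerivAt
    exact (h2.comp_hasDerivAt (0:ℝ) h1).congr_deriv (by simp)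
  have := hconv.le_slope_of_hasDerivAt (mem_univ 0) (mem_univ 1) one_pos hd
  simpa [slope_def_field] using this

/-- uniform bound for the weighted energy integral from a large time `t₀` on -/
lemma hb_bound
    {H : Type*} [NormedAddCommGroup H] [InnerProductSpace ℝ H]
    (c : ℝ) (hc : 0 < c) (t₀ : ℝ) (a a' a'' γ : ℝ → ℝ) (g : ℝ → H)
    (W : ℝ → ℝ) (x x' x'' p : ℝ → H) (z : H)
    (ha0 : ∀ t ∈ Ici t₀, 0 < a t)
    (ha : ∀ t ∈ Ici t₀, HasDerivAt a (a' t) t)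
    (ha' : ∀ t ∈ Ici t₀, HasDerivAt a' (a'' t) t)
    (ha'0 : ∀ t ∈ Ici t₀, 0 ≤ a' t)
    (hγ : ∀ t ∈ Ici t₀, a t * γ t = c)
    (hε : ∀ t ∈ Ici t₀, 2 * a' t ≤ c / 114)
    (ha'' : ∀ t ∈ Ici t₀, a'' t ≤ 0)
    (hx1 : ∀ t ∈ Ici t₀, HasDerivAt x (x' t) t)
    (hx2 : ∀ t ∈ Ici t₀, HasDerivAt x' (x'' t) t)
    (hode : ∀ t ∈ Ici t₀, x'' t + γ t • x' t + p t = g t)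
    (hW : ∀ t ∈ Ici t₀, HasDerivAt W (⟪x' t, x'' t⟫ + ⟪p t, x' t⟫) t)
    (hWx : ∀ t ∈ Ici t₀, ‖x' t‖ ^ 2 / 2 ≤ W t)
    (hWc : ∀ t ∈ Ici t₀, W t - ‖x' t‖ ^ 2 / 2 ≤ ⟪p t, x t - z⟫)
    (hg : IntegrableOn (fun t => a t * ‖g t‖) (Ici t₀)) :
    ∃ C, ∀ T ∈ Ici t₀, ∫ t in t₀..T, a t * W t ≤ C := by
  set G := ∫ t in Ici t₀, a t * ‖g t‖ with hG
  set E := a t₀ ^ 2 * W t₀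
  set F := a t₀ * ⟪x' t₀, x t₀ - z⟫ + (c - a' t₀) * (‖x t₀ - z‖ ^ 2 / 2)
  refine ⟨6 * (F + 19 / c * (E + G ^ 2) + 4 * G ^ 2 / c), fun T hT => ?_⟩
  have hT' : t₀ ≤ T := hT
  have cx : ContinuousOn x (Ici t₀) := fun t ht => (hx1 t ht).continuousAt.continuousWithinAt
  have cx' : ContinuousOn x' (Ici t₀) := fun t ht => (hx2 t ht).continuousAt.continuousWithinAt
  have cW : ContinuousOn W (Ici t₀) := fun t ht => (hW t ht).continuousAt.continuousWithinAt
  have ca : ContinuousOn a (Ici t₀) := fun t ht => (ha t ht).continuousAt.continuousWithinAt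
  have ca' : ContinuousOn a' (Ici t₀) := fun t ht => (ha' t ht).continuousAt.continuousWithinAt
  have hsub : ∀ s, Icc t₀ s ⊆ Ici t₀ := fun s => Icc_subset_Ici_self
  have c1 : ContinuousOn (fun t => a t * W t) (Ici t₀) := ca.mul cW
  have c2 : ContinuousOn (fun t => a t * ‖x' t‖ ^ 2) (Ici t₀) := ca.mul (cx'.norm.pow 2)
  have i1 : ∀ s, IntegrableOn (fun t => a t * W t) (Icc t₀ s) := fun s =>
    (c1.mono (hsub s)).integrableOn_Icc
  have i2 : ∀ s, IntegrableOn (fun t => a t * ‖x' t‖ ^ 2) (Icc t₀ s) := fun s =>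
    (c2.mono (hsub s)).integrableOn_Icc
  have i3 : ∀ s, IntegrableOn (fun t => a t * ‖g t‖) (Icc t₀ s) := fun s => hg.mono_set (hsub s)
  have hWnn : ∀ t ∈ Ici t₀, 0 ≤ W t := fun t ht => le_trans (by positivity) (hWx t ht)
  -- maxima
  obtain ⟨sm, hsm, hmmax⟩ := isCompact_Icc.exists_isMaxOn (nonempty_Icc.2 hT')
    ((ca.mul cx'.norm).mono (hsub T))
  obtain ⟨sD, hsD, hDmax⟩ := isCompact_Icc.exists_isMaxOn (nonempty_Icc.2 hT')
    (((cx.sub (continuousOn_const (c := z))).norm).mono (hsub T))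
  set m := a sm * ‖x' sm‖ with hm
  set D := ‖x sD - z‖ with hD
  have hmm : ∀ t ∈ Icc t₀ T, a t * ‖x' t‖ ≤ m := fun t ht => hmmax ht
  have hDD : ∀ t ∈ Icc t₀ T, ‖x t - z‖ ≤ D := fun t ht => hDmax ht
  have hm0 : 0 ≤ m := mul_nonneg (ha0 sm (hsub T hsm)).le (norm_nonneg _)
  have hD0 : 0 ≤ D := norm_nonneg _
  set Iw := fun s => ∫ t in t₀..s, a t * W t with hIw
  set K := fun s => ∫ t in t₀..s, a t * ‖x' t‖ ^ 2 with hKK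
  set J := fun s => ∫ t in t₀..s, a t * ‖g t‖ with hJJ
  have hii : ∀ (f : ℝ → ℝ) s, t₀ ≤ s → IntegrableOn f (Icc t₀ s) →
      IntervalIntegrable f volume t₀ s := fun f s hs h =>
    (intervalIntegrable_iff_integrableOn_Icc_of_le hs).2 h
  have mono : ∀ (f : ℝ → ℝ), (∀ t ∈ Ici t₀, 0 ≤ f t) → IntegrableOn f (Icc t₀ T) →
      ∀ s ∈ Icc t₀ T, 0 ≤ (∫ t in t₀..s, f t) ∧
        (∫ t in t₀..s, f t) ≤ ∫ t in t₀..T, f t := by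
    intro f hf hi s hs
    refine ⟨intervalIntegral.integral_nonneg hs.1 fun t ht => hf t ht.1, ?_⟩
    refine intervalIntegral.integral_mono_interval le_rfl hs.1 hs.2 ?_ (hii f T hT' hi)
    filter_upwards [ae_restrict_mem measurableSet_Ioc] with t ht
    exact hf t ht.1.le
  have mI := mono _ (fun t ht => mul_nonneg (ha0 t ht).le (hWnn t ht)) (i1 T)
  have mK := mono _ (fun t ht => mul_nonneg (ha0 t ht).le (sq_nonneg ‖x' t‖)) (i2 T)
  have mJ : ∀ s ∈ Icc t₀ T, J s ≤ G := by
    intro s hs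
    simp only [hJJ, hG]
    rw [intervalIntegral.integral_of_le hs.1]
    refine setIntegral_mono_set hg ?_ ?_
    · filter_upwards [ae_restrict_mem measurableSet_Ici] with t ht
      exact mul_nonneg (ha0 t ht).le (norm_nonneg _)
    · exact (Ioc_subset_Icc_self.trans (hsub s)).eventuallyLE
  -- first inequality
  have key1 : ∀ s ∈ Icc t₀ T, a s ^ 2 * W s + c * K s ≤ E + c / 114 * Iw s + m * J s := by
    intro s hs
    have hd : ∀ t ∈ Ici t₀, HasDerivAt (fun t => a t ^ 2 * W t)
        (2 * a t * a' t * W t + a t ^ 2 * (⟪x' t, x'' t⟫ + ⟪p t, x' t⟫)) t := by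
      intro t ht
      exact (((ha t ht).pow 2).mul (hW t ht)).congr_deriv (by simp)
    have hint : IntegrableOn (fun t => c / 114 * (a t * W t) - c * (a t * ‖x' t‖ ^ 2)
        + m * (a t * ‖g t‖)) (Icc t₀ s) :=
      (((i1 s).const_mul _).sub ((i2 s).const_mul _)).add ((i3 s).const_mul _)
    have := intervalIntegral.sub_le_integral_of_hasDeriv_right_of_le (a := t₀) (b := s)
      (g := fun t => a t ^ 2 * W t) hs.1
      (fun t ht => (hd t ht.1).continuousAt.continuousWithinAt)
      (fun t ht => (hd t ht.1.le).hasDerivWithinAt) hint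
      (by
        intro t ht
        have ht' : t ∈ Ici t₀ := ht.1.le
        have hp : p t = g t - x'' t - γ t • x' t := by rw [← hode t ht']; abel
        have e1 : ⟪x' t, x'' t⟫ + ⟪p t, x' t⟫ = ⟪g t, x' t⟫ - γ t * ‖x' t‖ ^ 2 := by
          rw [hp, inner_sub_left, inner_sub_left, real_inner_smul_left,
            real_inner_self_eq_norm_sq, real_inner_comm (x' t) (x'' t)]
          ring
        rw [e1]
        have e2 : ⟪g t, x' t⟫ ≤ ‖g t‖ * ‖x' t‖ := real_inner_le_norm _ _
        have a0 := ha0 t ht'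
        have e3 := hmm t ⟨ht', ht.2.le.trans hs.2⟩
        have e4 : a t ^ 2 * ⟪g t, x' t⟫ ≤ m * (a t * ‖g t‖) := by
          calc a t ^ 2 * ⟪g t, x' t⟫ ≤ a t ^ 2 * (‖g t‖ * ‖x' t‖) := by gcongr
            _ = (a t * ‖x' t‖) * (a t * ‖g t‖) := by ring
            _ ≤ _ := by gcongr
        have e5 : (2 * a' t) * (a t * W t) ≤ c / 114 * (a t * W t) :=
          mul_le_mul_of_nonneg_right (hε t ht') (mul_nonneg a0.le (hWnn t ht'))
        have e6 : a t ^ 2 * (γ t * ‖x' t‖ ^ 2) = c * (a t * ‖x' t‖ ^ 2) := by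
          rw [← hγ t ht']; ring
        nlinarith)
    rw [intervalIntegral.integral_add, intervalIntegral.integral_sub,
      intervalIntegral.integral_const_mul, intervalIntegral.integral_const_mul,
      intervalIntegral.integral_const_mul] at this
    · simp only [hIw, hKK, hJJ]
      linarith
    all_goals apply hii _ _ hs.1
    · exact (i1 s).const_mul _
    · exact (i2 s).const_mul _
    · exact ((i1 s).const_mul _).sub ((i2 s).const_mul _)
    · exact (i3 s).const_mul _
  -- second inequality
  have key2 : ∀ s ∈ Icc t₀ T, a s * ⟪x' s, x s - z⟫ + (c - a' s) * (‖x s - z‖ ^ 2 / 2)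
      + a' s * (D ^ 2 / 2) + Iw s ≤ F + a' t₀ * (D ^ 2 / 2) + 3 / 2 * K s + D * J s := by
    intro s hs
    have hd : ∀ t ∈ Ici t₀, HasDerivAt (fun t => a t * ⟪x' t, x t - z⟫
          + (c - a' t) * (‖x t - z‖ ^ 2 / 2) + a' t * (D ^ 2 / 2))
        (a' t * ⟪x' t, x t - z⟫ + a t * (⟪x' t, x' t⟫ + ⟪x'' t, x t - z⟫)
          + (-a'' t * (‖x t - z‖ ^ 2 / 2) + (c - a' t) * ⟪x' t, x t - z⟫)
          + a'' t * (D ^ 2 / 2)) t := by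
      intro t ht
      have hz : HasDerivAt (fun t => x t - z) (x' t) t := (hx1 t ht).sub_const z
      have hn : HasDerivAt (fun t => ‖x t - z‖ ^ 2 / 2) ⟪x' t, x t - z⟫ t := by
        refine (hz.norm_sq.div_const 2).congr_deriv ?_
        rw [real_inner_comm]
        ring
      exact (((ha t ht).mul ((hx2 t ht).inner ℝ hz)).add
        (((ha' t ht).const_sub c).mul hn)).add ((ha' t ht).mul_const _)
    have hint : IntegrableOn (fun t => 3 / 2 * (a t * ‖x' t‖ ^ 2) - a t * W t
        + D * (a t * ‖g t‖)) (Icc t₀ s) :=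
      (((i2 s).const_mul _).sub (i1 s)).add ((i3 s).const_mul _)
    have := intervalIntegral.sub_le_integral_of_hasDeriv_right_of_le (a := t₀) (b := s)
      (g := fun t => a t * ⟪x' t, x t - z⟫
          + (c - a' t) * (‖x t - z‖ ^ 2 / 2) + a' t * (D ^ 2 / 2)) hs.1
      (fun t ht => (hd t ht.1).continuousAt.continuousWithinAt)
      (fun t ht => (hd t ht.1.le).hasDerivWithinAt) hint
      (by
        intro t ht
        have ht' : t ∈ Ici t₀ := ht.1.le
        have hp : x'' t = g t - p t - γ t • x' t := by rw [← hode t ht']; abel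
        have e1 : ⟪x'' t, x t - z⟫ = ⟪g t, x t - z⟫ - ⟪p t, x t - z⟫ - γ t * ⟪x' t, x t - z⟫ := by
          rw [hp, inner_sub_left, inner_sub_left, real_inner_smul_left]
        rw [e1, real_inner_self_eq_norm_sq]
        have e2 : ⟪g t, x t - z⟫ ≤ ‖g t‖ * ‖x t - z‖ := real_inner_le_norm _ _
        have a0 := ha0 t ht'
        have e3 := hDD t ⟨ht', ht.2.le.trans hs.2⟩
        have e4 : a t * ⟪g t, x t - z⟫ ≤ D * (a t * ‖g t‖) := by
          calc a t * ⟪g t, x t - z⟫ ≤ a t * (‖g t‖ * ‖x t - z‖) := by gcongr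
            _ ≤ a t * (‖g t‖ * D) := by gcongr
            _ = _ := by ring
        have e5 : ‖x t - z‖ ^ 2 ≤ D ^ 2 := by gcongr
        have e6 : a'' t * (D ^ 2 / 2) ≤ a'' t * (‖x t - z‖ ^ 2 / 2) :=
          mul_le_mul_of_nonpos_left (by linarith) (ha'' t ht')
        have e7 : a t * (γ t * ⟪x' t, x t - z⟫) = c * ⟪x' t, x t - z⟫ := by
          rw [← hγ t ht']; ring
        have e8 := mul_le_mul_of_nonneg_left (hWc t ht') a0.le
        nlinarith)
    rw [intervalIntegral.integral_add, intervalIntegral.integral_sub,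
      intervalIntegral.integral_const_mul,
      intervalIntegral.integral_const_mul] at this
    · simp only [hIw, hKK, hJJ, F]
      linarith
    all_goals apply hii _ _ hs.1
    · exact (i2 s).const_mul _
    · exact i1 s
    · exact ((i2 s).const_mul _).sub (i1 s)
    · exact (i3 s).const_mul _
  have hTT : T ∈ Icc t₀ T := ⟨hT', le_rfl⟩
  have hin : ∀ s ∈ Icc t₀ T, -(m * D) ≤ a s * ⟪x' s, x s - z⟫ := by
    intro s hs
    have a0 := ha0 s hs.1
    have e1 : -(‖x' s‖ * ‖x s - z‖) ≤ ⟪x' s, x s - z⟫ :=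
      neg_le_of_abs_le (abs_real_inner_le_norm _ _)
    have e2 : (a s * ‖x' s‖) * ‖x s - z‖ ≤ m * D :=
      mul_le_mul (hmm s hs) (hDD s hs) (norm_nonneg _) hm0
    have e3 := mul_le_mul_of_nonneg_left e1 a0.le
    linarith
  have hε0 := hε t₀ self_mem_Ici
  have hDsq : 0 ≤ D ^ 2 := sq_nonneg D
  have haD : a' t₀ * (D ^ 2 / 2) ≤ c / 228 * (D ^ 2 / 2) :=
    mul_le_mul_of_nonneg_right (by linarith) (by positivity)
  have hcD : 0 ≤ c * D ^ 2 := by positivity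
  refine hb_alg c E F G (Iw T) (K T) m D hc ?_ ?_ ?_ ?_
  · have k := key1 sm hsm
    have w := mul_le_mul_of_nonneg_left (hWx sm hsm.1) (sq_nonneg (a sm))
    have : m ^ 2 = a sm ^ 2 * ‖x' sm‖ ^ 2 := by rw [hm]; ring
    have k1 : 0 ≤ c * K sm := mul_nonneg hc.le (mK sm hsm).1
    have k2 : c / 114 * Iw sm ≤ c / 114 * Iw T :=
      mul_le_mul_of_nonneg_left (mI sm hsm).2 (by positivity)
    have k3 := mul_le_mul_of_nonneg_left (mJ sm hsm) hm0
    linarith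
  · have k := key1 T hTT
    have w := mul_nonneg (sq_nonneg (a T)) (hWnn T hT)
    have k3 := mul_le_mul_of_nonneg_left (mJ T hTT) hm0
    linarith
  · have k := key2 sD hsD
    have k1 := hin sD hsD
    have k2 : 0 ≤ Iw sD := (mI sD hsD).1
    have k4 : K sD ≤ K T := (mK sD hsD).2
    have k3 := mul_le_mul_of_nonneg_left (mJ sD hsD) hD0
    rw [← hD] at k
    linarith
  · have k := key2 T hTT
    have k1 := hin T hTT
    have k3 := mul_le_mul_of_nonneg_left (mJ T hTT) hD0
    have k5 : ‖x T - z‖ ^ 2 ≤ D ^ 2 := by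
      have := hDD T hTT
      gcongr
    have k6 : 0 ≤ (c - a' T) * (‖x T - z‖ ^ 2 / 2) + a' T * (D ^ 2 / 2)
        := by
      have k7 := mul_nonneg (ha'0 T hT) (sub_nonneg.2 k5)
      have k8 : 0 ≤ c * ‖x T - z‖ ^ 2 := by positivity
      linarith
    linarith

theorem heavy_ball_energy_integrable
    {H : Type*} [NormedAddCommGroup H] [InnerProductSpace ℝ H] [CompleteSpace H]
    (c α : ℝ) (hc : 0 < c) (hα0 : 0 ≤ α) (hα1 : α < 1)
    (Φ : H → ℝ) (Φ' : H → H) (Φstar : ℝ)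
    (hΦconv : ConvexOn ℝ Set.univ Φ)
    (hΦdiff : ∀ u : H, HasGradientAt Φ (Φ' u) u)
    (hΦcont : Continuous Φ')
    (hargmin : {v : H | ∀ u, Φ v ≤ Φ u}.Nonempty)
    (hΦstar : ∀ v ∈ {v : H | ∀ u, Φ v ≤ Φ u}, Φ v = Φstar)
    (g : ℝ → H) (hg : IntegrableOn g (Ici (0:ℝ)))
    (x x' x'' : ℝ → H)
    (hx1 : ∀ t ∈ Ici (0:ℝ), HasDerivAt x (x' t) t)
    (hx2 : ∀ t ∈ Ici (0:ℝ), HasDerivAt x' (x'' t) t)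
    (hode : ∀ t ∈ Ici (0:ℝ),
      x'' t + (c / (1 + t) ^ α) • x' t + Φ' (x t) = g t)
    (hgα : IntegrableOn (fun t => (1 + t) ^ α * ‖g t‖) (Ici (0:ℝ))) :
    IntegrableOn (fun t => (1 + t) ^ α * (‖x' t‖ ^ 2 / 2 + Φ (x t) - Φstar))
      (Ici (0:ℝ)) := by
  obtain ⟨z, hz⟩ := hargmin
  have hzs := hΦstar z hz
  have hpos : ∀ t ∈ Ici (0:ℝ), 0 < 1 + t := fun t ht => by
    have : (0:ℝ) ≤ t := ht
    linarith
  have hpow : ∀ β : ℝ, ∀ t ∈ Ici (0:ℝ),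
      HasDerivAt (fun t : ℝ => (1 + t) ^ β) (β * (1 + t) ^ (β - 1)) t := by
    intro β t ht
    have := ((hasDerivAt_id t).const_add 1).rpow_const (p := β) (Or.inl (hpos t ht).ne')
    simpa using this
  have hW : ∀ t ∈ Ici (0:ℝ), HasDerivAt (fun t => ‖x' t‖ ^ 2 / 2 + Φ (x t) - Φstar)
      (⟪x' t, x'' t⟫ + ⟪Φ' (x t), x' t⟫) t := by
    intro t ht
    have h1 := (hx2 t ht).norm_sq.div_const 2
    have h2 : HasDerivAt (fun t => Φ (x t)) ⟪Φ' (x t), x' t⟫ t := by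
      exact ((hΦdiff (x t)).hasFDerivAt.comp_hasDerivAt t (hx1 t ht)).congr_deriv (by simp)
    exact ((h1.add h2).sub_const Φstar).congr_deriv (by ring)
  have hlim : Tendsto (fun t : ℝ => 2 * (α * (1 + t) ^ (α - 1))) atTop (nhds 0) := by
    have h1 : Tendsto (fun t : ℝ => (1 + t) ^ (-(1 - α))) atTop (nhds 0) :=
      (tendsto_rpow_neg_atTop (by linarith)).comp (tendsto_atTop_add_const_left _ 1 tendsto_id)
    have := (h1.const_mul α).const_mul 2
    simpa using this
  obtain ⟨t₁, ht₁⟩ := eventually_atTop.1 (hlim.eventually_le_const (show 0 < c / 114 by positivity))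
  set t₀ := max t₁ 0
  have ht0 : 0 ≤ t₀ := le_max_right _ _
  have hsub : ∀ t ∈ Ici t₀, t ∈ Ici (0:ℝ) := fun t ht => ht0.trans ht
  have hWx : ∀ t, ‖x' t‖ ^ 2 / 2 ≤ ‖x' t‖ ^ 2 / 2 + Φ (x t) - Φstar := by
    intro t
    have := hz (x t)
    linarith
  obtain ⟨C, hC⟩ := hb_bound c hc t₀ (fun t => (1 + t) ^ α) (fun t => α * (1 + t) ^ (α - 1))
    (fun t => α * ((α - 1) * (1 + t) ^ (α - 1 - 1))) (fun t => c / (1 + t) ^ α) g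
    (fun t => ‖x' t‖ ^ 2 / 2 + Φ (x t) - Φstar) x x' x'' (fun t => Φ' (x t)) z
    (fun t ht => rpow_pos_of_pos (hpos t (hsub t ht)) _)
    (fun t ht => hpow α t (hsub t ht))
    (fun t ht => (hpow (α - 1) t (hsub t ht)).const_mul α)
    (fun t ht => mul_nonneg hα0 (rpow_nonneg (hpos t (hsub t ht)).le _))
    (fun t ht => mul_div_cancel₀ _ (rpow_pos_of_pos (hpos t (hsub t ht)) _).ne')
    (fun t ht => ht₁ t ((le_max_left _ _).trans ht))
    (fun t ht => mul_nonpos_of_nonneg_of_nonpos hα0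
      (mul_nonpos_of_nonpos_of_nonneg (by linarith) (rpow_nonneg (hpos t (hsub t ht)).le _)))
    (fun t ht => hx1 t (hsub t ht)) (fun t ht => hx2 t (hsub t ht))
    (fun t ht => hode t (hsub t ht)) (fun t ht => hW t (hsub t ht)) (fun t _ => hWx t)
    (by
      intro t _
      have h := hb_convex Φ hΦconv (x t) z _ (hΦdiff (x t))
      have h2 : ⟪Φ' (x t), x t - z⟫ = -⟪Φ' (x t), z - x t⟫ := by
        rw [← inner_neg_right, neg_sub]
      linarith)
    (hgα.mono_set hsub)
  have hcont : ContinuousOn (fun t => (1 + t) ^ α * (‖x' t‖ ^ 2 / 2 + Φ (x t) - Φstar))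
      (Ici (0:ℝ)) := fun t ht =>
    ((hpow α t ht).continuousAt.mul (hW t ht).continuousAt).continuousWithinAt
  have hIoi : IntegrableOn (fun t => (1 + t) ^ α * (‖x' t‖ ^ 2 / 2 + Φ (x t) - Φstar))
      (Ioi t₀) := by
    refine integrableOn_Ioi_of_intervalIntegral_norm_bounded (b := id) (l := atTop) C t₀
      (fun T => ?_) tendsto_id ?_
    · exact ((hcont.mono (fun t ht => hsub t ht.1)).integrableOn_Icc).mono_set Ioc_subset_Icc_self
    · filter_upwards [eventually_ge_atTop t₀] with T hT
      refine le_trans (le_of_eq ?_) (hC T hT)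
      refine intervalIntegral.integral_congr fun t ht => ?_
      rw [id, uIcc_of_le hT] at ht
      refine Real.norm_of_nonneg (mul_nonneg (rpow_nonneg (hpos t (hsub t ht.1)).le _) ?_)
      exact le_trans (by positivity) (hWx t)
  rw [← Icc_union_Ioi_eq_Ici ht0]
  exact (hcont.mono Icc_subset_Ici_self).integrableOn_Icc.union hIoi
end

section
/- Let ν ∈ [α, (1+α)/2] and let x be a solution of the heavy ball equation with vanishing damping and source term g satisfying ∫₀^∞ (1+t)^ν ‖g(t)‖ dt < ∞. Then ∫₀^∞ (1+t)^{2ν−α} ‖x'(t)‖² dt < ∞. -/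
open MeasureTheory Filter Real Set RealInnerProductSpace


theorem aux_gron (F F' P a : ℝ → ℝ) (t0 : ℝ)
    (hF : ∀ t, t0 ≤ t → HasDerivAt F (F' t) t)
    (hle : ∀ t, t0 ≤ t → F' t ≤ - P t + a t * (1 + F t))
    (hF0 : ∀ t, t0 ≤ t → 0 ≤ F t) (ha0 : ∀ t, t0 ≤ t → 0 ≤ a t)
    (ha : IntegrableOn a (Ici t0)) (hP0 : ∀ t, t0 ≤ t → 0 ≤ P t)
    (hP : ContinuousOn P (Ici t0)) : IntegrableOn P (Ici t0) := by
  have haI : IntegrableOn a (Ioi t0) := ha.mono_set Ioi_subset_Ici_self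
  have hlim := intervalIntegral_tendsto_integral_Ioi t0 haI tendsto_id
  have hii : ∀ u v, t0 ≤ u → t0 ≤ v → IntervalIntegrable a volume u v := fun u v hu hv =>
    (ha.mono_set (fun y hy => le_trans (le_min hu hv) hy.1)).intervalIntegrable
  have hFc : ContinuousOn F (Ici t0) := fun t ht => (hF t ht).continuousAt.continuousWithinAt
  have hmono : ∀ T, t0 ≤ T → ∫ t in t0..T, a t ≤ ∫ t in Ioi t0, a t := by
    intro T hT
    rw [intervalIntegral.integral_of_le hT]
    apply setIntegral_mono_set haI
    · filter_upwards [ae_restrict_mem measurableSet_Ioi] with t ht using ha0 t (le_of_lt ht)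
    · exact Ioc_subset_Ioi_self.eventuallyLE
  obtain ⟨t1, ht1, h1⟩ : ∃ t1, t0 ≤ t1 ∧ (∫ t in Ioi t0, a t) - 1/2 < ∫ t in t0..t1, a t := by
    have := (hlim.eventually (lt_mem_nhds (show (∫ t in Ioi t0, a t) - 1/2 < ∫ t in Ioi t0, a t by linarith))).and (eventually_ge_atTop t0)
    obtain ⟨t1, h, h'⟩ := this.exists
    exact ⟨t1, h', h⟩
  have hsmall : ∀ T, t1 ≤ T → ∫ t in t1..T, a t ≤ 1/2 := by
    intro T hT
    have := intervalIntegral.integral_add_adjacent_intervals (hii t0 t1 le_rfl ht1) (hii t1 T ht1 (ht1.trans hT))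
    have := hmono T (ht1.trans hT)
    linarith
  -- key inequality
  have key : ∀ T, t1 ≤ T → ∀ M, (∀ t ∈ Icc t1 T, 1 + F t ≤ M) →
      F T - F t1 + ∫ t in t1..T, P t ≤ M / 2 := by
    intro T hT M hM
    have hsub : Icc t1 T ⊆ Ici t0 := fun y hy => ht1.trans hy.1
    have hPi : IntegrableOn P (Icc t1 T) := (hP.mono hsub).integrableOn_Icc
    have hai : IntegrableOn a (Icc t1 T) := ha.mono_set hsub
    have h := intervalIntegral.sub_le_integral_of_hasDeriv_right_of_le (g := F) (g' := F')
      (φ := fun t => a t * M - P t) hT (hFc.mono hsub)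
      (fun t ht => (hF t (ht1.trans ht.1.le)).hasDerivWithinAt)
      ((hai.mul_const M).sub hPi) (by
        intro t ht
        have h2 := hle t (ht1.trans ht.1.le)
        have h3 := mul_le_mul_of_nonneg_left (hM t ⟨ht.1.le, ht.2.le⟩) (ha0 t (ht1.trans ht.1.le))
        linarith)
    rw [intervalIntegral.integral_sub ((hii t1 T ht1 (ht1.trans hT)).mul_const M)
      (by rw [intervalIntegrable_iff_integrableOn_Icc_of_le hT]; exact hPi),
      intervalIntegral.integral_mul_const] at h
    have hM0 : 0 ≤ M := by
      have := hM t1 ⟨le_rfl, hT⟩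
      have := hF0 t1 ht1
      linarith
    have := mul_le_mul_of_nonneg_right (hsmall T hT) hM0
    linarith
  have hPint0 : ∀ T, t1 ≤ T → 0 ≤ ∫ t in t1..T, P t := fun T hT =>
    intervalIntegral.integral_nonneg hT (fun u hu => hP0 u (ht1.trans hu.1))
  have hbd : ∀ T, t1 ≤ T → ∀ t ∈ Icc t1 T, 1 + F t ≤ 2 * (1 + F t1) := by
    intro T hT
    obtain ⟨m, hm, hmax⟩ := isCompact_Icc.exists_isMaxOn (nonempty_Icc.2 hT)
      (hFc.mono (fun y hy => ht1.trans hy.1 : Icc t1 T ⊆ Ici t0))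
    have h := key m hm.1 (1 + F m) (fun t ht => by
      have : F t ≤ F m := hmax ⟨ht.1, ht.2.trans hm.2⟩
      linarith)
    have h2 := hPint0 m hm.1
    intro t ht
    have : F t ≤ F m := hmax ht
    linarith
  have hfin : IntegrableOn P (Ioi t1) := by
    refine integrableOn_Ioi_of_intervalIntegral_norm_bounded (b := id) (l := atTop) (2 * (1 + F t1)) t1 ?_ tendsto_id ?_
    · intro i
      exact ((hP.mono (fun y hy => ht1.trans hy.1 : Icc t1 i ⊆ Ici t0)).integrableOn_Icc).mono_set Ioc_subset_Icc_self
    · filter_upwards [eventually_ge_atTop t1] with T hT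
      have h := key T hT _ (hbd T hT)
      have h0 := hF0 T (ht1.trans hT)
      have : ∫ t in t1..T, ‖P t‖ = ∫ t in t1..T, P t := by
        apply intervalIntegral.integral_congr
        intro t ht
        rw [uIcc_of_le hT] at ht
        exact Real.norm_of_nonneg (hP0 t (ht1.trans ht.1))
      simp only [id]
      rw [this]
      linarith [hF0 t1 ht1]
  rw [← Icc_union_Ioi_eq_Ici ht1]
  exact ((hP.mono (fun y hy => hy.1 : Icc t0 t1 ⊆ Ici t0)).integrableOn_Icc).union hfin

theorem aux_convex {H : Type*} [NormedAddCommGroup H] [InnerProductSpace ℝ H] [CompleteSpace H]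
    (Φ : H → ℝ) (hΦconv : ConvexOn ℝ Set.univ Φ) (u n z : H) (h : HasGradientAt Φ n u) :
    Φ u - Φ z ≤ ⟪n, u - z⟫ := by
  have hd : HasDerivAt (fun s : ℝ => Φ (u + s • (z - u))) ⟪n, z - u⟫ 0 := by
    have h1 : HasDerivAt (fun s : ℝ => u + s • (z - u)) ((1:ℝ) • (z - u)) 0 :=
      ((hasDerivAt_id (0:ℝ)).smul_const (z - u)).const_add u
    have h2 : HasFDerivAt Φ (InnerProductSpace.toDual ℝ H n) (u + (0:ℝ) • (z - u)) := by
      simpa using h.hasFDerivAt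
    simpa [Function.comp_def] using h2.comp_hasDerivAt (0:ℝ) h1
  have hc : ConvexOn ℝ Set.univ (fun s : ℝ => Φ (u + s • (z - u))) := by
    have := hΦconv.comp_affineMap (AffineMap.lineMap u z : ℝ →ᵃ[ℝ] H)
    simpa [Function.comp_def, AffineMap.lineMap_apply, add_comm] using this
  have := hc.le_slope_of_hasDerivAt (mem_univ 0) (mem_univ 1) one_pos hd
  simp [slope_def_field] at this
  have e : ⟪n, u - z⟫ = - ⟪n, z - u⟫ := by rw [← inner_neg_right, neg_sub]
  rw [e]; linarith


theorem aux_deriv {H : Type*} [NormedAddCommGroup H] [InnerProductSpace ℝ H] [CompleteSpace H]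
    (c α ν β Φstar : ℝ) (Φ : H → ℝ) (x x' : ℝ → H) (n w z : H) (t : ℝ) (ht : 0 ≤ t)
    (hΦ : HasGradientAt Φ n (x t))
    (hx1 : HasDerivAt x (x' t) t) (hx2 : HasDerivAt x' w t) :
    HasDerivAt (fun t => (1 + t) ^ (2 * ν) * ((1/2) * ⟪x' t, x' t⟫ + Φ (x t) - Φstar)
      + 2 * ((1 + t) ^ β * ⟪x t - z, x' t⟫ +
        (c * (1 + t) ^ (β - α) - β * (1 + t) ^ (β - 1)) * ((1/2) * ⟪x t - z, x t - z⟫)))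
      ((2 * ν) * (1 + t) ^ (2 * ν - 1) * ((1/2) * ⟪x' t, x' t⟫ + Φ (x t) - Φstar)
        + (1 + t) ^ (2 * ν) * (⟪x' t, w⟫ + ⟪n, x' t⟫)
        + 2 * (β * (1 + t) ^ (β - 1) * ⟪x t - z, x' t⟫
          + (1 + t) ^ β * (⟪x' t, x' t⟫ + ⟪x t - z, w⟫)
          + (c * ((β - α) * (1 + t) ^ (β - α - 1)) - β * ((β - 1) * (1 + t) ^ (β - 1 - 1)))
              * ((1/2) * ⟪x t - z, x t - z⟫)
          + (c * (1 + t) ^ (β - α) - β * (1 + t) ^ (β - 1)) * ⟪x t - z, x' t⟫)) t := by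
  have hs : (1 + t) ≠ 0 := by positivity
  have hp : ∀ e : ℝ, HasDerivAt (fun t : ℝ => (1 + t) ^ e) (e * (1 + t) ^ (e - 1)) t := by
    intro e
    have := ((hasDerivAt_id t).const_add 1).rpow_const (p := e) (Or.inl hs)
    simpa using this
  have hy : HasDerivAt (fun t => x t - z) (x' t) t := hx1.sub_const z
  have hΦx : HasDerivAt (fun t => Φ (x t)) ⟪n, x' t⟫ t := by
    simpa [Function.comp_def] using hΦ.hasFDerivAt.comp_hasDerivAt t hx1
  have hvv := hx2.inner ℝ hx2
  have hyv := hy.inner ℝ hx2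
  have hyy := hy.inner ℝ hy
  have := ((hp (2*ν)).mul (((hvv.const_mul (1/2)).add hΦx).sub_const Φstar)).add
    ((((hp β).mul hyv).add ((((hp (β - α)).const_mul c).sub ((hp (β-1)).const_mul β)).mul
      (hyy.const_mul (1/2)))).const_mul 2)
  refine this.congr_deriv ?_
  rw [real_inner_comm w (x' t), real_inner_comm (x' t) (x t - z)]
  simp only [Pi.add_apply, Pi.sub_apply]
  ring

theorem aux_lower {H : Type*} [NormedAddCommGroup H] [InnerProductSpace ℝ H]
    (c β b k d W0 : ℝ) (v y : H) (hb : 0 ≤ b) (hk : 0 ≤ k) (hd : 0 ≤ d)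
    (hdc : d ^ 2 ≤ c / 10) (hβ : β ≤ 1) (hW0 : 0 ≤ W0) :
    (b * ‖v‖) ^ 2 / 4 + c / 2 * (k * ‖y‖) ^ 2 ≤
      b ^ 2 * ((1/2) * ⟪v, v⟫ + W0) + 2 * (b * k * d * ⟪y, v⟫ +
        (c * k ^ 2 - β * (k ^ 2 * d ^ 2)) * ((1/2) * ⟪y, y⟫)) := by
  rw [real_inner_self_eq_norm_sq, real_inner_self_eq_norm_sq]
  have h1 := neg_le_of_abs_le (abs_real_inner_le_norm y v)
  have h2 := mul_le_mul_of_nonneg_left h1 (by positivity : 0 ≤ b * k * d)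
  have h3 : 0 ≤ b ^ 2 * W0 := by positivity
  have h4 : 0 ≤ (1 - β) * (d * (k * ‖y‖)) ^ 2 := mul_nonneg (by linarith) (sq_nonneg _)
  have h5 := mul_le_mul_of_nonneg_right hdc (sq_nonneg (k * ‖y‖))
  have h6 := sq_nonneg (b * ‖v‖ / 2 - 2 * (d * (k * ‖y‖)))
  linarith

theorem aux_upper {H : Type*} [NormedAddCommGroup H] [InnerProductSpace ℝ H]
    (c α ν β b k d e L R S W0 f F : ℝ) (v y n g : H) (hc : 0 < c)
    (hb : 0 ≤ b) (hk : 0 ≤ k) (hd : 0 ≤ d) (he : 0 ≤ e) (hL : 0 ≤ L) (hR : 0 ≤ R) (hS : 0 ≤ S)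
    (hLe : L = e * d ^ 2) (hLb : L = b * k * d) (hd1 : d ≤ 1)
    (hdc : d ^ 2 ≤ c / 10) (hν : ν ≤ 1) (hβ : β ≤ 1) (hβ' : -1 ≤ β) (hβα : β ≤ α)
    (hW0 : 0 ≤ W0) (hconv : W0 ≤ ⟪n, y⟫)
    (hF : (b * ‖v‖) ^ 2 / 4 + c / 2 * (k * ‖y‖) ^ 2 ≤ F)
    (hf1 : b ^ 2 * f = c * e) (hf2 : L * f = c * k ^ 2) :
    (2 * ν) * L * ((1/2) * ⟪v, v⟫ + W0)
        + b ^ 2 * (⟪v, g - f • v - n⟫ + ⟪n, v⟫)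
        + 2 * (β * (k ^ 2 * d ^ 2) * ⟪y, v⟫
          + L * (⟪v, v⟫ + ⟪y, g - f • v - n⟫)
          + (c * ((β - α) * R) - β * ((β - 1) * (k ^ 2 * S))) * ((1/2) * ⟪y, y⟫)
          + (c * k ^ 2 - β * (k ^ 2 * d ^ 2)) * ⟪y, v⟫)
      ≤ - (c / 2 * (e * ‖v‖ ^ 2)) + ((2 + 2 / c) * (b * ‖g‖) + 4 / c * S) * (1 + F) := by
  have e1 : ⟪v, g - f • v - n⟫ = ⟪v, g⟫ - f * ‖v‖ ^ 2 - ⟪n, v⟫ := by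
    rw [inner_sub_right, inner_sub_right, real_inner_smul_right, real_inner_self_eq_norm_sq,
      real_inner_comm v n]
  have e2 : ⟪y, g - f • v - n⟫ = ⟪y, g⟫ - f * ⟪y, v⟫ - ⟪n, y⟫ := by
    rw [inner_sub_right, inner_sub_right, real_inner_smul_right, real_inner_comm y n]
  rw [e1, e2, real_inner_self_eq_norm_sq, real_inner_self_eq_norm_sq]
  -- source terms
  have i1 : b ^ 2 * ⟪v, g⟫ ≤ (b * ‖g‖) * (b * ‖v‖) := by
    have := mul_le_mul_of_nonneg_left (real_inner_le_norm v g) (sq_nonneg b)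
    linarith
  have i2 : L * ⟪y, g⟫ ≤ (b * ‖g‖) * (k * ‖y‖) := by
    have h := mul_le_mul_of_nonneg_left (real_inner_le_norm y g) hL
    have h' := mul_le_mul_of_nonneg_left hd1 (by positivity : 0 ≤ (b * ‖g‖) * (k * ‖y‖))
    rw [hLb] at h ⊢
    linarith
  have hq : (k * ‖y‖) ^ 2 ≤ 2 / c * F := by
    have : c / 2 * (k * ‖y‖) ^ 2 ≤ F := by linarith [sq_nonneg (b * ‖v‖)]
    rw [div_mul_eq_mul_div, le_div_iff₀ hc]
    linarith
  have hF0 : 0 ≤ F := le_trans (by positivity) hF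
  have hp : b * ‖v‖ ≤ 1 + F := by
    have : 0 ≤ c / 2 * (k * ‖y‖) ^ 2 := by positivity
    linarith [sq_nonneg (b * ‖v‖ / 2 - 1)]
  have hq2 : 2 * (k * ‖y‖) ≤ 1 + 2 / c * F := by linarith [sq_nonneg (k * ‖y‖ - 1)]
  have h2c : 0 ≤ 2 / c := by positivity
  have h2F : 0 ≤ 2 / c * F := by positivity
  have i3 : (b * ‖g‖) * (b * ‖v‖ + 2 * (k * ‖y‖)) ≤ (b * ‖g‖) * ((2 + 2 / c) * (1 + F)) := by
    apply mul_le_mul_of_nonneg_left _ (by positivity)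
    linarith
  have i4 : S * (2 * (k * ‖y‖) ^ 2) ≤ S * (4 / c * (1 + F)) := by
    apply mul_le_mul_of_nonneg_left _ hS
    have : 4 / c = 2 * (2 / c) := by ring
    rw [this]; linarith
  have i5 : -(β * (β - 1)) * (S * (k * ‖y‖) ^ 2) ≤ 2 * (S * (k * ‖y‖) ^ 2) := by
    apply mul_le_mul_of_nonneg_right _ (by positivity)
    nlinarith
  have i6 : c * ((β - α) * R) * ‖y‖ ^ 2 ≤ 0 := by
    have : 0 ≤ c * ((α - β) * R) * ‖y‖ ^ 2 := by
      have : 0 ≤ α - β := by linarith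
      positivity
    linarith
  have i7 : L * W0 ≤ L * ⟪n, y⟫ := mul_le_mul_of_nonneg_left hconv hL
  have i8 : ν * (L * (‖v‖ ^ 2 + 2 * W0)) ≤ 1 * (L * (‖v‖ ^ 2 + 2 * W0)) :=
    mul_le_mul_of_nonneg_right hν (by positivity)
  have i9 : L * ‖v‖ ^ 2 ≤ c / 10 * (e * ‖v‖ ^ 2) := by
    have := mul_le_mul_of_nonneg_right hdc (by positivity : 0 ≤ e * ‖v‖ ^ 2)
    rw [hLe]; linarith
  have i10 : 0 ≤ c * (e * ‖v‖ ^ 2) := by positivity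
  have j1 : b ^ 2 * (f * ‖v‖ ^ 2) = c * (e * ‖v‖ ^ 2) := by rw [← mul_assoc, hf1, mul_assoc]
  have j2 : L * (f * ⟪y, v⟫) = c * k ^ 2 * ⟪y, v⟫ := by rw [← mul_assoc, hf2]
  linarith

theorem heavy_ball_velocity_weighted_integrable
    {H : Type*} [NormedAddCommGroup H] [InnerProductSpace ℝ H] [CompleteSpace H]
    (c α : ℝ) (hc : 0 < c) (hα0 : 0 ≤ α) (hα1 : α < 1)
    (Φ : H → ℝ) (Φ' : H → H) (Φstar : ℝ)
    (hΦconv : ConvexOn ℝ Set.univ Φ)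
    (hΦdiff : ∀ u : H, HasGradientAt Φ (Φ' u) u)
    (hΦcont : Continuous Φ')
    (hargmin : {v : H | ∀ u, Φ v ≤ Φ u}.Nonempty)
    (hΦstar : ∀ v ∈ {v : H | ∀ u, Φ v ≤ Φ u}, Φ v = Φstar)
    (g : ℝ → H) (hg : IntegrableOn g (Ici (0:ℝ)))
    (x x' x'' : ℝ → H)
    (hx1 : ∀ t ∈ Ici (0:ℝ), HasDerivAt x (x' t) t)
    (hx2 : ∀ t ∈ Ici (0:ℝ), HasDerivAt x' (x'' t) t)
    (hode : ∀ t ∈ Ici (0:ℝ),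
      x'' t + (c / (1 + t) ^ α) • x' t + Φ' (x t) = g t)
    (ν : ℝ) (hν1 : α ≤ ν) (hν2 : ν ≤ (1 + α) / 2)
    (hgν : IntegrableOn (fun t => (1 + t) ^ ν * ‖g t‖) (Ici (0:ℝ))) :
    IntegrableOn (fun t => (1 + t) ^ (2 * ν - α) * ‖x' t‖ ^ 2) (Ici (0:ℝ)) := by
  obtain ⟨z, hz⟩ := hargmin
  have hzs := hΦstar z hz
  have hcont : ContinuousOn (fun t => (1 + t) ^ (2 * ν - α) * ‖x' t‖ ^ 2) (Ici (0:ℝ)) := by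
    apply ContinuousOn.mul
    · apply ContinuousOn.rpow_const (by fun_prop)
      intro t ht
      have : (0:ℝ) ≤ t := ht
      left; positivity
    · have : ContinuousOn x' (Ici 0) := fun t ht => (hx2 t ht).continuousAt.continuousWithinAt
      exact this.norm.pow 2
  -- choice of the initial time
  have hlim : Tendsto (fun t : ℝ => (1 + t) ^ (-((1 - α) / 2))) atTop (nhds 0) :=
    (tendsto_rpow_neg_atTop (by linarith)).comp (tendsto_atTop_add_const_left _ 1 tendsto_id)
  have hlim2 := hlim.pow 2
  obtain ⟨t0, ht0⟩ : ∃ t0 : ℝ, ∀ t, t0 ≤ t →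
      ((1 + t) ^ (-((1 - α) / 2))) ^ 2 ≤ c / 10 := by
    have := hlim2.eventually (gt_mem_nhds (show (0:ℝ) ^ 2 < c / 10 by rw [zero_pow two_ne_zero]; positivity))
    obtain ⟨t0, h⟩ := eventually_atTop.1 this
    exact ⟨t0, fun t ht => (h t ht).le⟩
  set T := max t0 0 with hT
  have hT0 : 0 ≤ T := le_max_right _ _
  have hTt : ∀ t, T ≤ t → ((1 + t) ^ (-((1 - α) / 2))) ^ 2 ≤ c / 10 := fun t ht =>
    ht0 t ((le_max_left _ _).trans ht)
  set β := 2 * ν - 1 with hβ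
  -- power identities
  have pw : ∀ t : ℝ, 0 ≤ t →
      (1 + t) ^ (2 * ν) = ((1 + t) ^ ν) ^ 2 ∧
      (1 + t) ^ β = (1 + t) ^ ν * (1 + t) ^ ((β - α) / 2) * (1 + t) ^ (-((1 - α) / 2)) ∧
      (1 + t) ^ (β - α) = ((1 + t) ^ ((β - α) / 2)) ^ 2 ∧
      (1 + t) ^ (β - 1) =
        ((1 + t) ^ ((β - α) / 2)) ^ 2 * ((1 + t) ^ (-((1 - α) / 2))) ^ 2 ∧
      (1 + t) ^ (β - 1 - 1) = ((1 + t) ^ ((β - α) / 2)) ^ 2 * (1 + t) ^ (α - 2) ∧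
      (1 + t) ^ β = (1 + t) ^ (2 * ν - α) * ((1 + t) ^ (-((1 - α) / 2))) ^ 2 := by
    intro t ht
    have hs : 0 < 1 + t := by linarith
    have hsq : ∀ e : ℝ, ((1 + t) ^ e) ^ 2 = (1 + t) ^ (e + e) := fun e => by
      rw [rpow_add hs, sq]
    refine ⟨?_, ?_, ?_, ?_, ?_, ?_⟩ <;>
      simp only [hsq, ← rpow_add hs] <;> congr 1 <;> linarith
  have hW0 : ∀ t, 0 ≤ Φ (x t) - Φstar := fun t => by
    have := hz (x t); rw [hzs] at this; linarith
  have hlow : ∀ t, T ≤ t → ((1 + t) ^ ν * ‖x' t‖) ^ 2 / 4 +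
      c / 2 * ((1 + t) ^ ((β - α) / 2) * ‖x t - z‖) ^ 2 ≤
      (1 + t) ^ (2 * ν) * ((1/2) * ⟪x' t, x' t⟫ + Φ (x t) - Φstar)
      + 2 * ((1 + t) ^ β * ⟪x t - z, x' t⟫ +
        (c * (1 + t) ^ (β - α) - β * (1 + t) ^ (β - 1)) * ((1/2) * ⟪x t - z, x t - z⟫)) := by
    intro t ht
    have ht' : 0 ≤ t := hT0.trans ht
    obtain ⟨p1, p2, p3, p4, p5, p6⟩ := pw t ht'
    rw [p1, p3, p4, p2, add_sub_assoc]
    exact aux_lower c β _ _ _ _ _ _ (by positivity) (by positivity) (by positivity)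
      (hTt t ht) (by linarith) (hW0 t)
  have main := aux_gron _ _ (fun t => c / 2 * ((1 + t) ^ (2 * ν - α) * ‖x' t‖ ^ 2))
    (fun t => (2 + 2 / c) * ((1 + t) ^ ν * ‖g t‖) + 4 / c * (1 + t) ^ (α - 2)) T
    (fun t ht => aux_deriv c α ν β Φstar Φ x x' (Φ' (x t)) (x'' t) z t (hT0.trans ht)
      (hΦdiff _) (hx1 t (hT0.trans ht)) (hx2 t (hT0.trans ht)))
    ?_ ?_ ?_ ?_ ?_ ?_
  · have h1 : IntegrableOn (fun t => (1 + t) ^ (2 * ν - α) * ‖x' t‖ ^ 2) (Ici T) := by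
      have := main.const_mul (2 / c)
      refine this.congr (Eventually.of_forall fun t => ?_)
      simp only
      field_simp
    rw [← Icc_union_Ici_eq_Ici hT0]
    exact ((hcont.mono (fun y hy => hy.1 : Icc 0 T ⊆ Ici 0)).integrableOn_Icc).union h1
  · intro t ht
    have ht' : 0 ≤ t := hT0.trans ht
    have hs : 0 < 1 + t := by linarith
    have hlo := hlow t ht
    set F := (1 + t) ^ (2 * ν) * ((1/2) * ⟪x' t, x' t⟫ + Φ (x t) - Φstar)
      + 2 * ((1 + t) ^ β * ⟪x t - z, x' t⟫ +
        (c * (1 + t) ^ (β - α) - β * (1 + t) ^ (β - 1)) * ((1/2) * ⟪x t - z, x t - z⟫)) with hF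
    obtain ⟨p1, p2, p3, p4, p5, p6⟩ := pw t ht'
    have hw : x'' t = g t - (c / (1 + t) ^ α) • x' t - Φ' (x t) := by
      rw [← hode t ht']; abel
    have hcv := aux_convex Φ hΦconv (x t) (Φ' (x t)) z (hΦdiff _)
    rw [hzs] at hcv
    have := aux_upper c α ν β ((1 + t) ^ ν) ((1 + t) ^ ((β - α) / 2)) ((1 + t) ^ (-((1 - α) / 2)))
      ((1 + t) ^ (2 * ν - α)) ((1 + t) ^ β) ((1 + t) ^ (β - α - 1)) ((1 + t) ^ (α - 2))
      (Φ (x t) - Φstar) (c / (1 + t) ^ α) F (x' t) (x t - z) (Φ' (x t)) (g t) hc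
      (by positivity) (by positivity) (by positivity) (by positivity) (by positivity)
      (by positivity) (by positivity) p6 p2
      (rpow_le_one_of_one_le_of_nonpos (by linarith) (by linarith))
      (hTt t ht) (by linarith) (by linarith) (by linarith) (by linarith) (hW0 t) hcv hlo
      (by rw [← p1, rpow_sub hs]; ring) (by rw [← p3, rpow_sub hs β α]; ring)
    rw [← hw, ← p1, ← p4, ← p5, ← p3, ← add_sub_assoc] at this
    exact this
  · intro t ht
    refine le_trans ?_ (hlow t ht)
    positivity
  · intro t ht
    have ht' : 0 ≤ t := hT0.trans ht
    positivity
  · have hsub : Ici T ⊆ Ici 0 := Ici_subset_Ici.2 hT0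
    refine ((hgν.mono_set hsub).const_mul _).add (Integrable.const_mul ?_ _)
    have h1 := integrableOn_Ioi_rpow_of_lt (show α - 2 < -1 by linarith) (one_pos)
    have h2 : IntegrableOn (fun t : ℝ => (1 + t) ^ (α - 2)) (Ioi 0) := by
      have := (measurePreserving_add_left (volume : Measure ℝ) 1).integrableOn_comp_preimage
        (MeasurableEquiv.addLeft (1:ℝ)).measurableEmbedding (f := fun t : ℝ => t ^ (α - 2)) (s := Ioi 1)
      have h3 := this.2 h1
      simpa [Function.comp_def] using h3
    exact ((integrableOn_Ici_iff_integrableOn_Ioi (by simp)).2 h2).mono_set hsub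
  · intro t ht
    have ht' : 0 ≤ t := hT0.trans ht
    positivity
  · exact (hcont.mono (Ici_subset_Ici.2 hT0)).const_mul (c / 2)
end
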